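/- arXiv:math/0105193 — 2 statements merged into one kernel-verified Lean document; each statement's English description precedes it below -/
import Mathlib

section
/- Let X be a holomorphic vector field on a neighborhood of 0 in ℂⁿ with X(0) = 0 which is isochore, i.e. trace(DX(x)) = 0 for all x near 0, and suppose DX(0) = S + N where S is the diagonal endomorphism of ℂⁿ with diagonal entries γ = (γ₁, …, γₙ) ∈ ℂⁿ, N is nilpotent, and S∘N = N∘S. Let r be the toric degree of γ and let ρ¹, …, ρʳ ∈ ℤⁿ be a ℤ-basis of Q(γ). Then X admits a volume-preserving convergent Poincaré–Dulac normalization (i.e. one in which the normalizing map φ additionally satisfies det(Dφ(x)) = 1 for all x near 0) if and only if there exist an open neighborhood U of 0 in ℂⁿ and holomorphic vector fields V₁, …, V_r : U → ℂⁿ such that: (a) each V_k is isochore, i.e. trace(DV_k(x)) = 0 on U; (b) V_k(0) = 0 and DV_k(0) is the diagonal endomorphism with entries ρᵏ for each k; (c) [V_j, V_k] = 0 on U for all j, k; (d) [X, V_k] = 0 on U for all k; (e) for each k and each x ∈ U there is a curve c : ℝ → U with c(0) = x, satisfying c′(t) = i·V_k(c(t)) for all t ∈ ℝ (real derivative, i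 = √−1 acting by complex scalar multiplication), and c(t + 2π) = c(t) for all t ∈ ℝ. -/
/-- `Y` is in Poincaré–Dulac normal form on the neighborhood `U` of `0`:
writing the Jordan–Chevalley decomposition `DY(0) = S + N` with `S` semisimple,
`N` nilpotent and `S ∘ N = N ∘ S`, the Lie bracket `[Y, Yˢ]` (where `Yˢ x = S x`)
vanishes on `U`. -/
def InPDNormalForm (𝕂 : Type*) [NontriviallyNormedField 𝕂] {n : ℕ}
    (Y : (Fin n → 𝕂) → (Fin n → 𝕂)) (U : Set (Fin n → 𝕂)) : Prop :=
  ∃ S N : (Fin n → 𝕂) →L[𝕂] (Fin n → 𝕂),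
    fderiv 𝕂 Y 0 = S + N ∧
    Module.End.IsSemisimple (S : Module.End 𝕂 (Fin n → 𝕂)) ∧
    IsNilpotent (N : Module.End 𝕂 (Fin n → 𝕂)) ∧
    S ∘L N = N ∘L S ∧
    ∀ x ∈ U, VectorField.lieBracket 𝕂 Y (fun y => S y) x = 0

/-- `X` admits a convergent Poincaré–Dulac normalization: there are an analytic
vector field `Y` near `0`, in Poincaré–Dulac normal form with `Y 0 = 0`, and an
analytic map `φ` near `0` with `φ 0 = 0` and `Dφ(0)` invertible, such that
`Dφ(x) (Y x) = X (φ x)` for all `x` near `0`. -/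
def AdmitsPDNormalization (𝕂 : Type*) [NontriviallyNormedField 𝕂] {n : ℕ}
    (X : (Fin n → 𝕂) → (Fin n → 𝕂)) : Prop :=
  ∃ (V : Set (Fin n → 𝕂)) (Y φ : (Fin n → 𝕂) → (Fin n → 𝕂)),
    IsOpen V ∧ (0 : Fin n → 𝕂) ∈ V ∧
    AnalyticOnNhd 𝕂 Y V ∧ AnalyticOnNhd 𝕂 φ V ∧
    Y 0 = 0 ∧ φ 0 = 0 ∧ Function.Bijective (fderiv 𝕂 φ 0) ∧
    InPDNormalForm 𝕂 Y V ∧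
    ∀ x ∈ V, fderiv 𝕂 φ x (Y x) = X (φ x)

/-- `c ∈ ℤⁿ` is a resonance relation for the eigenvalues `γ ∈ ℂⁿ`:
`Σ c_j γ_j = 0`, all `c_j ≥ -1`, `Σ c_j ≥ 1`, and at most one `c_j` is
negative. -/
def IsResonanceRelation {n : ℕ} (γ : Fin n → ℂ) (c : Fin n → ℤ) : Prop :=
  (∑ j, (c j : ℂ) * γ j = 0) ∧ (∀ j, -1 ≤ c j) ∧ (1 ≤ ∑ j, c j) ∧
    ∀ j k, c j < 0 → c k < 0 → j = k

/-- The lattice `Q(γ) ⊆ ℤⁿ` of `ρ` with `Σ ρ_j c_j = 0` for every resonance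
relation `c`, and `ρ_j = ρ_k` whenever `γ_j = γ_k`. -/
def QLattice {n : ℕ} (γ : Fin n → ℂ) : Set (Fin n → ℤ) :=
  {ρ | (∀ c, IsResonanceRelation γ c → ∑ j, ρ j * c j = 0) ∧
    ∀ j k, γ j = γ k → ρ j = ρ k}

/-- The diagonal (continuous) linear endomorphism of `ℂⁿ` with diagonal
entries `γ`. -/
noncomputable def diagCLM {n : ℕ} (γ : Fin n → ℂ) :
    (Fin n → ℂ) →L[ℂ] (Fin n → ℂ) :=
  LinearMap.toContinuousLinearMap (Matrix.toLin' (Matrix.diagonal γ))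

/-- `X` admits a volume-preserving convergent Poincaré–Dulac normalization:
as for `AdmitsPDNormalization`, with the normalizing map `φ` additionally
satisfying `det (Dφ(x)) = 1` near `0`. -/
def AdmitsVolPDNormalization {n : ℕ} (X : (Fin n → ℂ) → (Fin n → ℂ)) : Prop :=
  ∃ (V : Set (Fin n → ℂ)) (Y φ : (Fin n → ℂ) → (Fin n → ℂ)),
    IsOpen V ∧ (0 : Fin n → ℂ) ∈ V ∧
    AnalyticOnNhd ℂ Y V ∧ AnalyticOnNhd ℂ φ V ∧
    Y 0 = 0 ∧ φ 0 = 0 ∧ Function.Bijective (fderiv ℂ φ 0) ∧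
    InPDNormalForm ℂ Y V ∧
    (∀ x ∈ V,
      LinearMap.det (fderiv ℂ φ x : (Fin n → ℂ) →ₗ[ℂ] (Fin n → ℂ)) = 1) ∧
    ∀ x ∈ V, fderiv ℂ φ x (Y x) = X (φ x)

section Helpers

open Filter Topology

section LocalInverse

variable {E F : Type*} [NormedAddCommGroup E] [NormedSpace ℂ E] [CompleteSpace E]
  [NormedAddCommGroup F] [NormedSpace ℂ F]

/-- Analytic inverse function theorem. -/
theorem AnalyticAt.exists_analytic_leftInverse_rightInverse {f : E → F} {a : E} {i : E ≃L[ℂ] F}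
    (hf : AnalyticAt ℂ f a) (hi : fderiv ℂ f a = i) :
    ∃ g : F → E, AnalyticAt ℂ g (f a) ∧ g (f a) = a ∧
      (∀ᶠ y in 𝓝 (f a), f (g y) = y) ∧ ∀ᶠ x in 𝓝 a, g (f x) = x := by
  have hs : HasStrictFDerivAt f (i : E →L[ℂ] F) a := hi ▸ hf.hasStrictFDerivAt
  let e := hs.toOpenPartialHomeomorph f
  have ha : a ∈ e.source := hs.mem_toOpenPartialHomeomorph_source
  refine ⟨e.symm, e.analyticAt_symm' ha hf hi, e.left_inv ha, ?_, ?_⟩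
  · filter_upwards [e.open_target.mem_nhds (e.map_source ha)] with y hy using e.right_inv hy
  · filter_upwards [e.open_source.mem_nhds ha] with x hx using e.left_inv hx

/-- The derivative of a left inverse is a left inverse of the derivative. -/
theorem fderiv_comp_fderiv_of_leftInverse {G : Type*} [NormedAddCommGroup G] [NormedSpace ℂ G]
    {f : G → F} {g : F → G} {x : G}
    (hg : DifferentiableAt ℂ g (f x)) (hf : DifferentiableAt ℂ f x)
    (h : ∀ᶠ y in 𝓝 x, g (f y) = y) :
    fderiv ℂ g (f x) ∘L fderiv ℂ f x = ContinuousLinearMap.id ℂ G := by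
  rw [← fderiv_comp x hg hf]
  exact (EventuallyEq.fderiv_eq (f := id) h).trans fderiv_id

end LocalInverse

/-- Lie brackets of related vector fields are related. -/
theorem fderiv_lieBracket_of_related {E F : Type*} [NormedAddCommGroup E] [NormedSpace ℂ E]
    [NormedAddCommGroup F] [NormedSpace ℂ F] [CompleteSpace F] {f : E → F} {Y Z : E → E} {X V : F → F} {x : E}
    (hf : AnalyticAt ℂ f x) (hY : DifferentiableAt ℂ Y x) (hZ : DifferentiableAt ℂ Z x)
    (hX : DifferentiableAt ℂ X (f x)) (hV : DifferentiableAt ℂ V (f x))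
    (hYX : ∀ᶠ y in 𝓝 x, fderiv ℂ f y (Y y) = X (f y))
    (hZV : ∀ᶠ y in 𝓝 x, fderiv ℂ f y (Z y) = V (f y)) :
    fderiv ℂ f x (VectorField.lieBracket ℂ Y Z x) = VectorField.lieBracket ℂ X V (f x) := by
  have hfd := hf.differentiableAt
  rw [VectorField.fderiv_apply_lieBracket hf.contDiffAt (n := 2) (by simp) hZ hY,
    EventuallyEq.fderiv_eq hYX, EventuallyEq.fderiv_eq hZV, VectorField.lieBracket,
    fderiv_fun_comp x hX hfd, fderiv_fun_comp x hV hfd]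
  simp [hYX.self_of_nhds, hZV.self_of_nhds]

section Det

variable {n : ℕ}

theorem analyticAt_linearMap_det {G : Type*} [NormedAddCommGroup G] [NormedSpace ℂ G]
    {M : G → (Fin n → ℂ) →L[ℂ] (Fin n → ℂ)} {x : G} (hM : AnalyticAt ℂ M x) :
    AnalyticAt ℂ (fun y => LinearMap.det (M y : (Fin n → ℂ) →ₗ[ℂ] (Fin n → ℂ))) x := by
  simp_rw [← LinearMap.det_toMatrix', Matrix.det_apply']
  refine Finset.analyticAt_fun_sum _ fun σ _ => ?_
  refine analyticAt_const.fun_mul (Finset.analyticAt_fun_prod _ fun i _ => ?_)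
  simp only [LinearMap.toMatrix'_apply]
  exact (((ContinuousLinearMap.proj (R := ℂ) (φ := fun _ : Fin n => ℂ) (σ i)) ∘L
    (ContinuousLinearMap.apply ℂ (Fin n → ℂ) (Pi.single i (1 : ℂ)))).analyticAt _).comp hM

theorem hasDerivAt_det_one_add_smul (K : (Fin n → ℂ) →ₗ[ℂ] (Fin n → ℂ)) :
    HasDerivAt (fun t : ℂ => LinearMap.det (1 + t • K)) (LinearMap.trace ℂ _ K) 0 := by
  have h : ∀ t : ℂ, LinearMap.det (1 + t • K) = 1 + (LinearMap.toMatrix' K).trace * t +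
      ((1 + (Polynomial.X : Polynomial ℂ) • (LinearMap.toMatrix' K).map Polynomial.C).det.divX.divX).eval t
        * t ^ 2 := by
    intro t
    rw [← Matrix.det_one_add_smul, ← LinearMap.det_toMatrix', map_add, map_smul,
      LinearMap.toMatrix'_one]
  rw [funext h]
  have hp := Polynomial.hasDerivAt
    ((1 + (Polynomial.X : Polynomial ℂ) • (LinearMap.toMatrix' K).map Polynomial.C).det.divX.divX) (0 : ℂ)
  have := (((hasDerivAt_id (0 : ℂ)).const_mul (LinearMap.toMatrix' K).trace).const_add 1).add
    (hp.mul (hasDerivAt_pow 2 (0 : ℂ)))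
  refine this.congr_deriv ?_
  simp [LinearMap.trace_eq_matrix_trace ℂ (Pi.basisFun ℂ (Fin n)), LinearMap.toMatrix_eq_toMatrix']

/-- Jacobi's formula for the derivative of the determinant. -/
theorem fderiv_det_apply_comp (M K : (Fin n → ℂ) →L[ℂ] (Fin n → ℂ)) :
    fderiv ℂ (fun L : (Fin n → ℂ) →L[ℂ] (Fin n → ℂ) =>
        LinearMap.det (L : (Fin n → ℂ) →ₗ[ℂ] (Fin n → ℂ))) M (K ∘L M) =
      LinearMap.trace ℂ _ (K : (Fin n → ℂ) →ₗ[ℂ] (Fin n → ℂ)) *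
        LinearMap.det (M : (Fin n → ℂ) →ₗ[ℂ] (Fin n → ℂ)) := by
  have hd := (analyticAt_linearMap_det (n := n) (analyticAt_id (z := M))).differentiableAt.hasFDerivAt
  have hline : HasDerivAt (fun t : ℂ => M + t • (K ∘L M)) (K ∘L M) 0 := by
    simpa using ((hasDerivAt_id (0 : ℂ)).smul_const (K ∘L M)).const_add M
  have h1 := HasFDerivAt.comp_hasDerivAt_of_eq (x := (0 : ℂ)) (y := M) (f := fun t : ℂ => M + t • (K ∘L M)) hd hline
    (by ext; simp)
  have h2 := (hasDerivAt_det_one_add_smul (K : (Fin n → ℂ) →ₗ[ℂ] (Fin n → ℂ))).mul_const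
    (LinearMap.det (M : (Fin n → ℂ) →ₗ[ℂ] (Fin n → ℂ)))
  refine h1.unique (h2.congr_of_eventuallyEq (Eventually.of_forall fun t => ?_))
  simp only [Function.comp, id]
  rw [← LinearMap.det_comp]
  rfl

/-- Liouville's formula for related vector fields: the divergences of `A` and `V` differ by the
logarithmic derivative of the Jacobian determinant. -/
theorem fderiv_det_fderiv_of_related {f A V : (Fin n → ℂ) → (Fin n → ℂ)} {x : Fin n → ℂ}
    {B : (Fin n → ℂ) →L[ℂ] (Fin n → ℂ)}
    (hf : AnalyticAt ℂ f x) (hA : DifferentiableAt ℂ A x) (hV : DifferentiableAt ℂ V (f x))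
    (hB : fderiv ℂ f x ∘L B = ContinuousLinearMap.id ℂ _)
    (h : ∀ᶠ y in 𝓝 x, fderiv ℂ f y (A y) = V (f y)) :
    fderiv ℂ (fun y => LinearMap.det (fderiv ℂ f y : (Fin n → ℂ) →ₗ[ℂ] (Fin n → ℂ))) x (A x) =
      (LinearMap.trace ℂ _ (fderiv ℂ V (f x) : (Fin n → ℂ) →ₗ[ℂ] (Fin n → ℂ)) -
        LinearMap.trace ℂ _ (fderiv ℂ A x : (Fin n → ℂ) →ₗ[ℂ] (Fin n → ℂ))) *
      LinearMap.det (fderiv ℂ f x : (Fin n → ℂ) →ₗ[ℂ] (Fin n → ℂ)) := by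
  have hB' : B ∘L fderiv ℂ f x = ContinuousLinearMap.id ℂ _ := by
    have h1 : (fderiv ℂ f x : (Fin n → ℂ) →ₗ[ℂ] (Fin n → ℂ)) *
        (B : (Fin n → ℂ) →ₗ[ℂ] (Fin n → ℂ)) = 1 :=
      LinearMap.ext fun v => DFunLike.congr_fun hB v
    have h2 := mul_eq_one_comm.1 h1
    exact ContinuousLinearMap.ext fun v => DFunLike.congr_fun h2 v
  have hdet := (analyticAt_linearMap_det (n := n) (analyticAt_id (z := fderiv ℂ f x))).differentiableAt
  have hff := hf.fderiv.differentiableAt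
  have hH : fderiv ℂ (fderiv ℂ f) x (A x) =
      (fderiv ℂ V (f x) - fderiv ℂ f x ∘L fderiv ℂ A x ∘L B) ∘L fderiv ℂ f x := by
    ext1 w
    have hsymm : fderiv ℂ (fderiv ℂ f) x (A x) w = fderiv ℂ (fderiv ℂ f) x w (A x) :=
      hf.contDiffAt.isSymmSndFDerivAt (n := 2) (by simp) (A x) w
    have e1 := congrArg (fun T => T w) (EventuallyEq.fderiv_eq (𝕜 := ℂ) h)
    simp only [fderiv_clm_apply hff hA, fderiv_fun_comp x hV hf.differentiableAt] at e1
    have e2 : B (fderiv ℂ f x w) = w := DFunLike.congr_fun hB' w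
    rw [hsymm]
    simp only [add_apply, ContinuousLinearMap.comp_apply,
      ContinuousLinearMap.flip_apply, sub_apply, e2] at e1 ⊢
    rw [← e1]; abel
  have hcomp : fderiv ℂ (fun y => LinearMap.det (fderiv ℂ f y : (Fin n → ℂ) →ₗ[ℂ] (Fin n → ℂ))) x
      (A x) = fderiv ℂ (fun L : (Fin n → ℂ) →L[ℂ] (Fin n → ℂ) =>
        LinearMap.det (L : (Fin n → ℂ) →ₗ[ℂ] (Fin n → ℂ))) (fderiv ℂ f x)
        (fderiv ℂ (fderiv ℂ f) x (A x)) := by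
    have := fderiv_fun_comp (𝕜 := ℂ) x (g := fun L : (Fin n → ℂ) →L[ℂ] (Fin n → ℂ) =>
        LinearMap.det (L : (Fin n → ℂ) →ₗ[ℂ] (Fin n → ℂ))) hdet hff
    rw [this]; rfl
  rw [hcomp, hH, fderiv_det_apply_comp]
  congr 1
  rw [ContinuousLinearMap.toLinearMap_sub, map_sub]
  congr 1
  have : ((fderiv ℂ f x ∘L fderiv ℂ A x ∘L B : (Fin n → ℂ) →L[ℂ] (Fin n → ℂ)) :
      (Fin n → ℂ) →ₗ[ℂ] (Fin n → ℂ)) = (fderiv ℂ f x : (Fin n → ℂ) →ₗ[ℂ] (Fin n → ℂ)) ∘ₗ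
      ((fderiv ℂ A x : (Fin n → ℂ) →ₗ[ℂ] (Fin n → ℂ)) ∘ₗ (B : (Fin n → ℂ) →ₗ[ℂ] (Fin n → ℂ))) := rfl
  rw [this, LinearMap.trace_comp_comm', LinearMap.comp_assoc]
  congr 1
  exact LinearMap.ext fun v => congrArg (fderiv ℂ A x) (DFunLike.congr_fun hB' v)

end Det

section Superposition

variable {K E F : Type*} [TopologicalSpace K] [CompactSpace K]
  [NormedAddCommGroup E] [NormedSpace ℂ E] [NormedAddCommGroup F] [NormedSpace ℂ F]

/-- The pointwise action of a continuous multilinear map on continuous functions. -/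
noncomputable def ContinuousMultilinearMap.superposition (K : Type*) [TopologicalSpace K]
    [CompactSpace K] {d : ℕ} (p : E [×d]→L[ℂ] F) : C(K, E) [×d]→L[ℂ] C(K, F) :=
  MultilinearMap.mkContinuous
    { toFun := fun u => ⟨fun t => p fun i => u i t, by fun_prop⟩
      map_update_add' := by
        intro _ u i v w
        ext t
        have h : ∀ z : C(K, E), (fun j => Function.update u i z j t) =
            Function.update (fun j => u j t) i (z t) := by
          intro z; ext j; by_cases hj : j = i
          · subst hj; simp
          · simp [hj]
        simp [h]
      map_update_smul' := by
        intro _ u i c v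
        ext t
        have h : ∀ z : C(K, E), (fun j => Function.update u i z j t) =
            Function.update (fun j => u j t) i (z t) := by
          intro z; ext j; by_cases hj : j = i
          · subst hj; simp
          · simp [hj]
        simp [h] }
    ‖p‖ (by
      intro u
      refine (ContinuousMap.norm_le _ (by positivity)).2 fun t => (p.le_opNorm _).trans ?_
      gcongr with i
      exact (u i).norm_coe_le_norm t)

theorem ContinuousMultilinearMap.superposition_apply {d : ℕ} (p : E [×d]→L[ℂ] F)
    (u : Fin d → C(K, E)) (t : K) : p.superposition K u t = p fun i => u i t :=
  rfl

theorem ContinuousMultilinearMap.norm_superposition_le {d : ℕ} (p : E [×d]→L[ℂ] F) :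
    ‖p.superposition K‖ ≤ ‖p‖ :=
  MultilinearMap.mkContinuous_norm_le _ (norm_nonneg _) _

/-- The superposition operator `u ↦ f ∘ u` of an analytic map is analytic on continuous functions
with values near the base point. -/
theorem AnalyticAt.exists_superposition [CompleteSpace F] {f : E → F} (hf : AnalyticAt ℂ f 0) :
    ∃ Φ : C(K, E) → C(K, F), AnalyticAt ℂ Φ 0 ∧ ∀ᶠ u in 𝓝 (0 : C(K, E)), ∀ t, Φ u t = f (u t) := by
  obtain ⟨p, r, hp⟩ := hf
  let q : FormalMultilinearSeries ℂ C(K, E) C(K, F) := fun d => (p d).superposition K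
  have hq : r ≤ q.radius :=
    hp.r_le.trans (FormalMultilinearSeries.radius_le_of_le fun d => (p d).norm_superposition_le)
  have hs := q.hasFPowerSeriesOnBall (hp.r_pos.trans_le hq)
  refine ⟨q.sum, hs.analyticAt, ?_⟩
  filter_upwards [Metric.eball_mem_nhds (0 : C(K, E)) hp.r_pos] with u hu t
  have hu' : u t ∈ Metric.eball (0 : E) r := by
    rw [mem_eball_zero_iff] at hu ⊢
    refine lt_of_le_of_lt ?_ hu
    rw [enorm_le_iff_norm_le]
    exact u.norm_coe_le_norm t
  have h1 := (hs.hasSum (Metric.eball_subset_eball hq hu)).mapL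
    (ContinuousMap.evalCLM ℂ (M := F) t)
  have h2 := hp.hasSum hu'
  rw [zero_add] at h1 h2
  exact h1.unique h2

/-- The derivative of a superposition operator is computed pointwise. -/
theorem fderiv_superposition_apply {f : E → F} {Φ : C(K, E) → C(K, F)} {u : C(K, E)}
    (hΦ : DifferentiableAt ℂ Φ u) (t : K) (hf : DifferentiableAt ℂ f (u t))
    (h : ∀ᶠ v in 𝓝 u, Φ v t = f (v t)) (w : C(K, E)) :
    fderiv ℂ Φ u w t = fderiv ℂ f (u t) (w t) := by
  let e : C(K, F) →L[ℂ] F := ContinuousMap.evalCLM ℂ t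
  let e' : C(K, E) →L[ℂ] E := ContinuousMap.evalCLM ℂ t
  have h1 : HasFDerivAt (fun v => Φ v t) (e ∘L fderiv ℂ Φ u) u :=
    e.hasFDerivAt.comp u hΦ.hasFDerivAt
  have h2 : HasFDerivAt (fun v : C(K, E) => f (v t)) (fderiv ℂ f (u t) ∘L e') u :=
    HasFDerivAt.comp (g := f) u hf.hasFDerivAt e'.hasFDerivAt
  exact DFunLike.congr_fun (h1.unique (h2.congr_of_eventuallyEq h)) w

/-- A superposition operator together with the formula for its derivative. -/
theorem AnalyticAt.exists_superposition_fderiv [CompleteSpace F] {f : E → F}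
    (hf : AnalyticAt ℂ f 0) :
    ∃ Φ : C(K, E) → C(K, F), AnalyticAt ℂ Φ 0 ∧ ∀ᶠ u in 𝓝 (0 : C(K, E)),
      AnalyticAt ℂ Φ u ∧ (∀ t, AnalyticAt ℂ f (u t)) ∧ (∀ t, Φ u t = f (u t)) ∧
      ∀ w t, fderiv ℂ Φ u w t = fderiv ℂ f (u t) (w t) := by
  obtain ⟨Φ, hΦ, h⟩ := hf.exists_superposition (K := K)
  refine ⟨Φ, hΦ, ?_⟩
  obtain ⟨ε, hε, hfε⟩ := Metric.eventually_nhds_iff_ball.1 hf.eventually_analyticAt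
  filter_upwards [hΦ.eventually_analyticAt, h.eventually_nhds, h,
    Metric.ball_mem_nhds (0 : C(K, E)) hε] with u h1 h2 h3 h4
  have h5 : ∀ t, AnalyticAt ℂ f (u t) := fun t => hfε _ (by
    rw [mem_ball_zero_iff] at h4 ⊢
    exact (u.norm_coe_le_norm t).trans_lt h4)
  exact ⟨h1, h5, h3, fun w t => fderiv_superposition_apply h1.differentiableAt t
    (h5 t).differentiableAt (h2.mono fun v hv => hv t) w⟩

end Superposition

section ContinuousMapOperators

variable {K E : Type*} [TopologicalSpace K] [CompactSpace K]
  [NormedAddCommGroup E] [NormedSpace ℂ E]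

/-- Pointwise application of a continuous family of operators. -/
noncomputable def ContinuousMap.applyCLM (Q : C(K, E →L[ℂ] E)) : C(K, E) →L[ℂ] C(K, E) :=
  LinearMap.mkContinuous
    { toFun := fun u => ⟨fun t => Q t (u t), by fun_prop⟩
      map_add' := fun u v => by ext; simp
      map_smul' := fun c u => by ext; simp }
    ‖Q‖ (fun u => (ContinuousMap.norm_le _ (by positivity)).2 fun t =>
      (Q t).le_of_opNorm_le_of_le (Q.norm_coe_le_norm t) (u.norm_coe_le_norm t))

@[simp]
theorem ContinuousMap.applyCLM_apply (Q : C(K, E →L[ℂ] E)) (u : C(K, E)) (t : K) :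
    Q.applyCLM u t = Q t (u t) :=
  rfl

/-- Integration from `0` to `t` as an operator on continuous functions on `[0, T]`. -/
noncomputable def primitiveCLM (E : Type*) [NormedAddCommGroup E] [NormedSpace ℂ E] {T : ℝ}
    (hT : 0 ≤ T) : C(Set.Icc 0 T, E) →L[ℂ] C(Set.Icc 0 T, E) :=
  LinearMap.mkContinuous
    { toFun := fun u => ⟨fun t => ∫ s in (0 : ℝ)..t, Set.IccExtend hT u s,
        (intervalIntegral.continuous_primitive
          (fun a b => (u.continuous.Icc_extend' (h := hT)).intervalIntegrable a b) 0).comp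
            continuous_subtype_val⟩
      map_add' := fun u v => by
        ext t
        exact intervalIntegral.integral_add
          ((u.continuous.Icc_extend' (h := hT)).intervalIntegrable _ _)
          ((v.continuous.Icc_extend' (h := hT)).intervalIntegrable _ _)
      map_smul' := fun c u => by
        ext t
        exact intervalIntegral.integral_smul c _ }
    T (fun u => (ContinuousMap.norm_le _ (by positivity)).2 fun t => by
      refine (intervalIntegral.norm_integral_le_of_norm_le_const (C := ‖u‖)
        fun s _ => u.norm_coe_le_norm _).trans ?_
      rw [mul_comm, sub_zero, abs_of_nonneg t.2.1]
      gcongr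
      exact t.2.2)

theorem primitiveCLM_apply {T : ℝ} (hT : 0 ≤ T) (u : C(Set.Icc 0 T, E)) (t : Set.Icc 0 T) :
    primitiveCLM E hT u t = ∫ s in (0 : ℝ)..t, Set.IccExtend hT u s :=
  rfl

theorem hasDerivWithinAt_IccExtend_of_eq_add_primitive [CompleteSpace E] {T : ℝ} (hT : 0 ≤ T)
    {v h : C(Set.Icc 0 T, E)} {x : E}
    (hv : v = ContinuousMap.const _ x + primitiveCLM E hT h) :
    v ⟨0, Set.left_mem_Icc.2 hT⟩ = x ∧ ∀ t : Set.Icc 0 T,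
      HasDerivWithinAt (Set.IccExtend hT v) (h t) (Set.Icc 0 T) t := by
  have hv' : ∀ t, v t = x + ∫ s in (0 : ℝ)..t, Set.IccExtend hT h s :=
    fun t => DFunLike.congr_fun hv t
  refine ⟨by simp [hv'], fun t => ?_⟩
  have hc := h.continuous.Icc_extend' (h := hT)
  have hd : HasDerivAt (fun t : ℝ => x + ∫ s in (0 : ℝ)..t, Set.IccExtend hT h s) (h t) t := by
    have := (intervalIntegral.integral_hasDerivAt_right (hc.intervalIntegrable 0 (t : ℝ))
      hc.stronglyMeasurable.stronglyMeasurableAtFilter hc.continuousAt).const_add x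
    simpa using this
  refine hd.hasDerivWithinAt.congr (fun s hs => ?_) ?_
  · rw [Set.IccExtend_of_mem hT _ hs, hv']
  · rw [Set.IccExtend_val, hv']

end ContinuousMapOperators

section AnalyticFlow

variable {E : Type*} [NormedAddCommGroup E] [NormedSpace ℂ E]

/-- `R` is the flow of the linear vector field `i A`. -/
structure IsRotationFlow (A : E →L[ℂ] E) (R : ℝ → E →L[ℂ] E) : Prop where
  zero : R 0 = ContinuousLinearMap.id ℂ E
  neg_comp : ∀ t, R (-t) ∘L R t = ContinuousLinearMap.id ℂ E
  comm : ∀ t, A ∘L R t = R t ∘L A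
  hasDerivAt : ∀ t, HasDerivAt R (Complex.I • (A ∘L R t)) t

theorem HasDerivWithinAt.complex_clm_apply {R : ℝ → E →L[ℂ] E} {R' : E →L[ℂ] E} {v : ℝ → E}
    {v' : E} {s : Set ℝ} {t : ℝ} (hR : HasDerivWithinAt R R' s t) (hv : HasDerivWithinAt v v' s t) :
    HasDerivWithinAt (fun t => R t (v t)) (R' (v t) + R t v') s t := by
  have h := ((ContinuousLinearMap.restrictScalarsL ℂ E E ℝ ℝ).hasFDerivAt
    (x := R t)).comp_hasDerivWithinAt t hR
  exact h.clm_apply hv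

namespace IsRotationFlow

variable {A : E →L[ℂ] E} {R : ℝ → E →L[ℂ] E}

theorem continuous (hR : IsRotationFlow A R) : Continuous R :=
  continuous_iff_continuousAt.2 fun t => (hR.hasDerivAt t).continuousAt

theorem neg_apply (hR : IsRotationFlow A R) (t : ℝ) (x : E) : R (-t) (R t x) = x :=
  DFunLike.congr_fun (hR.neg_comp t) x

theorem apply_neg (hR : IsRotationFlow A R) (t : ℝ) (x : E) : R t (R (-t) x) = x := by
  simpa using hR.neg_apply (-t) x

theorem comm_apply (hR : IsRotationFlow A R) (t : ℝ) (x : E) : A (R t x) = R t (A x) :=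
  DFunLike.congr_fun (hR.comm t) x

/-- The rotations `R t`, `t ∈ [0, T]`, as an operator on continuous functions. -/
noncomputable def operator (hR : IsRotationFlow A R) (T : ℝ) :
    C(Set.Icc 0 T, E) →L[ℂ] C(Set.Icc 0 T, E) :=
  ContinuousMap.applyCLM ⟨fun t => R t, hR.continuous.comp continuous_subtype_val⟩

/-- The inverse rotations `R (-t)`, `t ∈ [0, T]`, as an operator on continuous functions. -/
noncomputable def invOperator (hR : IsRotationFlow A R) (T : ℝ) :
    C(Set.Icc 0 T, E) →L[ℂ] C(Set.Icc 0 T, E) :=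
  ContinuousMap.applyCLM ⟨fun t => R (-t), hR.continuous.comp continuous_subtype_val.neg⟩

@[simp]
theorem operator_apply (hR : IsRotationFlow A R) {T : ℝ} (v : C(Set.Icc 0 T, E))
    (t : Set.Icc 0 T) : hR.operator T v t = R t (v t) :=
  rfl

@[simp]
theorem invOperator_apply (hR : IsRotationFlow A R) {T : ℝ} (v : C(Set.Icc 0 T, E))
    (t : Set.Icc 0 T) : hR.invOperator T v t = R (-t) (v t) :=
  rfl

theorem hasDerivWithinAt_operator [CompleteSpace E] (hR : IsRotationFlow A R) {T : ℝ} (hT : 0 ≤ T)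
    {v h : C(Set.Icc 0 T, E)} {x : E}
    (hv : v = ContinuousMap.const _ x + primitiveCLM E hT
      (hR.invOperator T (Complex.I • h) -
        Complex.I • ContinuousMap.applyCLM (ContinuousMap.const _ A) v)) :
    hR.operator T v ⟨0, Set.left_mem_Icc.2 hT⟩ = x ∧ ∀ t : Set.Icc 0 T,
      HasDerivWithinAt (Set.IccExtend hT (hR.operator T v)) (Complex.I • h t) (Set.Icc 0 T) t := by
  obtain ⟨h0, hd⟩ := hasDerivWithinAt_IccExtend_of_eq_add_primitive hT hv
  refine ⟨by simp [h0, hR.zero], fun t => ?_⟩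
  have := (hR.hasDerivAt t).hasDerivWithinAt.complex_clm_apply (hd t)
  refine (this.congr_deriv ?_).congr (fun s hs => ?_) ?_
  · simp [hR.apply_neg, hR.comm_apply]
  · simp [Set.IccExtend_of_mem hT _ hs]
  · simp

end IsRotationFlow

/-- Analytic dependence on initial conditions of the flow of `i V` for times in `[0, T]`, near an
equilibrium of `V`. -/
theorem AnalyticAt.exists_flow [CompleteSpace E] {A : E →L[ℂ] E} {R : ℝ → E →L[ℂ] E}
    (hR : IsRotationFlow A R) {V : E → E} (hV : AnalyticAt ℂ V 0) (hV0 : V 0 = 0)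
    (hVA : fderiv ℂ V 0 = A) {T : ℝ} (hT : 0 ≤ T) :
    ∃ u : E → C(Set.Icc 0 T, E), AnalyticAt ℂ u 0 ∧ u 0 = 0 ∧ (∀ w t, fderiv ℂ u 0 w t = R t w) ∧
      ∀ᶠ x in 𝓝 0,
        (u x ⟨0, Set.left_mem_Icc.2 hT⟩ = x ∧ (∀ t, AnalyticAt ℂ V (u x t)) ∧
          ∀ t : Set.Icc 0 T, HasDerivWithinAt (Set.IccExtend hT (u x))
            (Complex.I • V (u x t)) (Set.Icc 0 T) t) ∧
        ∀ w, fderiv ℂ u x w ⟨0, Set.left_mem_Icc.2 hT⟩ = w ∧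
          ∀ t : Set.Icc 0 T, HasDerivWithinAt (Set.IccExtend hT (fderiv ℂ u x w))
            (Complex.I • fderiv ℂ V (u x t) (fderiv ℂ u x w t)) (Set.Icc 0 T) t := by
  obtain ⟨Φ, hΦ, hΦu⟩ := hV.exists_superposition_fderiv (K := Set.Icc 0 T)
  set M := hR.operator T with hM
  set M' := hR.invOperator T with hM'
  set P := primitiveCLM E hT
  set B := ContinuousMap.applyCLM (ContinuousMap.const (Set.Icc 0 T) A) with hB
  let F : C(Set.Icc 0 T, E) → C(Set.Icc 0 T, E) := fun v =>
    v - P (M' (Complex.I • Φ (M v)) - Complex.I • B v)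
  have hF : AnalyticAt ℂ F 0 := by
    have h1 : AnalyticAt ℂ (fun v => Φ (M v)) 0 :=
      AnalyticAt.fun_comp (g := Φ) (by simpa using hΦ) (M.analyticAt 0)
    refine analyticAt_id.sub ((P.analyticAt _).fun_comp ?_)
    exact ((M'.analyticAt _).fun_comp h1.fun_const_smul).fun_sub (B.analyticAt 0).fun_const_smul
  have hFd : ∀ v, AnalyticAt ℂ Φ (M v) → ∀ z, fderiv ℂ F v z =
      z - P (M' (Complex.I • fderiv ℂ Φ (M v) (M z)) - Complex.I • B z) := by
    intro v hv z
    have h1 : HasFDerivAt (fun v => Φ (M v)) (fderiv ℂ Φ (M v) ∘L M) v :=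
      hv.differentiableAt.hasFDerivAt.comp v M.hasFDerivAt
    have h2 : HasFDerivAt F _ v := (hasFDerivAt_id v).sub (P.hasFDerivAt.comp v
      ((M'.hasFDerivAt.comp v (h1.const_smul Complex.I)).sub
        ((B.hasFDerivAt (x := v)).const_smul Complex.I)))
    rw [h2.fderiv]
    rfl
  have hΦ00 : Φ 0 = 0 := by
    ext t
    simpa [hV0] using hΦu.self_of_nhds.2.2.1 t
  have hF0 : F 0 = 0 := by simp [F, hΦ00]
  have hcancel : ∀ z, M' (Complex.I • fderiv ℂ Φ 0 (M z)) - Complex.I • B z = 0 := by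
    intro z
    ext t
    have := hΦu.self_of_nhds.2.2.2 (M z) t
    simp only [ContinuousMap.zero_apply, hVA] at this
    simp [hM', hM, hB] at this ⊢
    rw [this, hR.comm_apply, hR.neg_apply, sub_self]
  have hFd0 : fderiv ℂ F 0 = ContinuousLinearEquiv.refl ℂ C(Set.Icc 0 T, E) := by
    ext z t
    rw [hFd 0 (by simpa using hΦ), map_zero, hcancel]
    simp
  obtain ⟨g, hg, hg0, hFg, -⟩ := hF.exists_analytic_leftInverse_rightInverse hFd0
  rw [hF0] at hg hg0 hFg
  let κ : E →L[ℂ] C(Set.Icc 0 T, E) := ContinuousLinearMap.const ℂ (Set.Icc 0 T)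
  have hκ0 : κ 0 = 0 := map_zero κ
  have hgκ : AnalyticAt ℂ (fun x => g (κ x)) 0 :=
    AnalyticAt.fun_comp (g := g) (by rwa [hκ0]) (κ.analyticAt 0)
  let u : E → C(Set.Icc 0 T, E) := fun x => M (g (κ x))
  have hu : AnalyticAt ℂ u 0 := (M.analyticAt _).fun_comp hgκ
  have hu0 : u 0 = 0 := by simp [u, hκ0, hg0]
  have hdg : ∀ᶠ x in 𝓝 (0 : E), F (g (κ x)) = κ x := by
    have : Tendsto κ (𝓝 0) (𝓝 0) := by simpa [hκ0] using κ.continuous.tendsto 0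
    exact this.eventually hFg
  have hut : Tendsto u (𝓝 0) (𝓝 0) := by simpa [hu0] using hu.continuousAt.tendsto
  have hgt : Tendsto (fun x => g (κ x)) (𝓝 0) (𝓝 0) := by
    simpa [hκ0, hg0] using hgκ.continuousAt.tendsto
  have hud : ∀ᶠ x in 𝓝 (0 : E), ∀ w, fderiv ℂ u x w = M (fderiv ℂ (fun x => g (κ x)) x w) ∧
      fderiv ℂ (fun x => g (κ x)) x w - P (M' (Complex.I • fderiv ℂ Φ (u x) (fderiv ℂ u x w)) -
        Complex.I • B (fderiv ℂ (fun x => g (κ x)) x w)) = κ w := by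
    filter_upwards [hgκ.eventually_analyticAt, hdg.eventually_nhds, hut.eventually hΦu,
      hgt.eventually hF.eventually_analyticAt] with x hx hx' hxΦ hxF w
    have h1 : fderiv ℂ u x = M ∘L fderiv ℂ (fun x => g (κ x)) x :=
      (M.hasFDerivAt.comp x hx.differentiableAt.hasFDerivAt).fderiv
    have h2 : fderiv ℂ F (g (κ x)) ∘L fderiv ℂ (fun x => g (κ x)) x = κ := by
      rw [← (hxF.differentiableAt.hasFDerivAt.comp x hx.differentiableAt.hasFDerivAt).fderiv]
      rw [show F ∘ (fun x => g (κ x)) = fun x => F (g (κ x)) from rfl,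
        EventuallyEq.fderiv_eq (𝕜 := ℂ) hx']
      exact κ.hasFDerivAt.fderiv
    refine ⟨by rw [h1]; rfl, ?_⟩
    have h3 := DFunLike.congr_fun h2 w
    rw [ContinuousLinearMap.comp_apply, hFd _ hxΦ.1] at h3
    rw [h1]
    exact h3
  refine ⟨u, hu, hu0, fun w t => ?_, ?_⟩
  · obtain ⟨h1, h2⟩ := hud.self_of_nhds w
    rw [hu0, h1, hcancel, map_zero, sub_zero] at h2
    rw [h1, h2]
    rfl
  · filter_upwards [hut.eventually hΦu, hud, hdg] with x hx hxd hxF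
    refine ⟨?_, fun w => ?_⟩
    · have := hR.hasDerivWithinAt_operator hT (v := g (κ x)) (h := Φ (u x)) (x := x)
        (sub_eq_iff_eq_add.1 hxF)
      refine ⟨this.1, hx.2.1, fun t => ?_⟩
      rw [← hx.2.2.1]
      exact this.2 t
    · obtain ⟨h1, h2⟩ := hxd w
      have := hR.hasDerivWithinAt_operator hT (v := fderiv ℂ (fun x => g (κ x)) x w)
        (h := fderiv ℂ Φ (u x) (fderiv ℂ u x w)) (x := w) (sub_eq_iff_eq_add.1 h2)
      rw [← hM, ← h1] at this
      refine ⟨this.1, fun t => ?_⟩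
      rw [← hx.2.2.2]
      exact this.2 t

end AnalyticFlow

section Averaging

variable {E : Type*} [NormedAddCommGroup E] [NormedSpace ℂ E]

theorem HasDerivWithinAt.Ici_of_Icc {F : Type*} [NormedAddCommGroup F] [NormedSpace ℝ F]
    {f : ℝ → F} {f' : F} {a b t : ℝ} (ht : t ∈ Set.Ico a b)
    (hf : HasDerivWithinAt f f' (Set.Icc a b) t) : HasDerivWithinAt f f' (Set.Ici t) t :=
  hf.mono_of_mem_nhdsWithin (mem_of_superset (Icc_mem_nhdsGE ht.2) (Set.Icc_subset_Icc_left ht.1))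

/-- Uniqueness of integral curves of `i V` along which `V` is analytic. -/
theorem eqOn_of_hasDerivWithinAt_analytic [CompleteSpace E] {V : E → E} {f g : ℝ → E} {T : ℝ}
    (hf : ∀ t ∈ Set.Icc 0 T, HasDerivWithinAt f (Complex.I • V (f t)) (Set.Icc 0 T) t)
    (hg : ∀ t ∈ Set.Icc 0 T, HasDerivWithinAt g (Complex.I • V (g t)) (Set.Icc 0 T) t)
    (hVf : ∀ t ∈ Set.Icc 0 T, AnalyticAt ℂ V (f t))
    (hVg : ∀ t ∈ Set.Icc 0 T, AnalyticAt ℂ V (g t)) (h0 : f 0 = g 0) :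
    Set.EqOn f g (Set.Icc 0 T) := by
  have hfc : ContinuousOn f (Set.Icc 0 T) := fun t ht => (hf t ht).continuousWithinAt
  have hgc : ContinuousOn g (Set.Icc 0 T) := fun t ht => (hg t ht).continuousWithinAt
  obtain ⟨K, hK⟩ : ∃ K, LipschitzOnWith K (fun x => Complex.I • V x)
      (f '' Set.Icc 0 T ∪ g '' Set.Icc 0 T) := by
    refine LocallyLipschitzOn.exists_lipschitzOnWith_of_compact
      ((isCompact_Icc.image_of_continuousOn hfc).union (isCompact_Icc.image_of_continuousOn hgc)) ?_
    intro x hx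
    have hx' : AnalyticAt ℂ V x := by
      rcases hx with ⟨t, ht, rfl⟩ | ⟨t, ht, rfl⟩
      exacts [hVf t ht, hVg t ht]
    obtain ⟨K, s, hs, hKs⟩ :=
      (hx'.fun_const_smul (c := Complex.I)).contDiffAt.exists_lipschitzOnWith (𝕂 := ℂ)
    exact ⟨K, s, mem_nhdsWithin_of_mem_nhds hs, hKs⟩
  exact ODE_solution_unique_of_mem_Icc_right (v := fun _ x => Complex.I • V x) (fun _ _ => hK) hfc
    (fun t ht => (hf t (Set.Ico_subset_Icc_self ht)).Ici_of_Icc ht)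
    (fun t ht => Or.inl ⟨t, Set.Ico_subset_Icc_self ht, rfl⟩) hgc
    (fun t ht => (hg t (Set.Ico_subset_Icc_self ht)).Ici_of_Icc ht)
    (fun t ht => Or.inr ⟨t, Set.Ico_subset_Icc_self ht, rfl⟩) h0

/-- Uniqueness for linear differential equations. -/
theorem eq_of_hasDerivWithinAt_linear {T : ℝ} (hT : 0 ≤ T) {L : Set.Icc 0 T → E →L[ℂ] E}
    (hL : Continuous L) {f g : C(Set.Icc 0 T, E)}
    (hf : ∀ t : Set.Icc 0 T, HasDerivWithinAt (Set.IccExtend hT f) (Complex.I • L t (f t))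
      (Set.Icc 0 T) t)
    (hg : ∀ t : Set.Icc 0 T, HasDerivWithinAt (Set.IccExtend hT g) (Complex.I • L t (g t))
      (Set.Icc 0 T) t)
    (h0 : f ⟨0, Set.left_mem_Icc.2 hT⟩ = g ⟨0, Set.left_mem_Icc.2 hT⟩) : f = g := by
  let L' : C(Set.Icc 0 T, E →L[ℂ] E) := ⟨L, hL⟩
  have key : Set.EqOn (Set.IccExtend hT f) (Set.IccExtend hT g) (Set.Icc 0 T) := by
    refine ODE_solution_unique_of_mem_Icc_right
      (v := fun t x => Complex.I • Set.IccExtend hT L t x) (s := fun _ => Set.univ)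
      (K := ‖L'‖₊) (fun t _ => ?_) f.continuous.Icc_extend'.continuousOn (fun t ht => ?_)
      (fun _ _ => trivial) g.continuous.Icc_extend'.continuousOn (fun t ht => ?_)
      (fun _ _ => trivial) ?_
    · refine LipschitzOnWith.of_dist_le_mul fun x _ y _ => ?_
      rw [dist_eq_norm, dist_eq_norm, ← smul_sub, ← map_sub, norm_smul, Complex.norm_I, one_mul]
      exact (Set.IccExtend hT L t).le_of_opNorm_le (L'.norm_coe_le_norm _) _
    · have := (hf ⟨t, Set.Ico_subset_Icc_self ht⟩).Ici_of_Icc ht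
      simpa only [Set.IccExtend_of_mem hT _ (Set.Ico_subset_Icc_self ht)] using this
    · have := (hg ⟨t, Set.Ico_subset_Icc_self ht⟩).Ici_of_Icc ht
      simpa only [Set.IccExtend_of_mem hT _ (Set.Ico_subset_Icc_self ht)] using this
    · simpa only [Set.IccExtend_of_mem hT _ (Set.left_mem_Icc.2 hT)] using h0
  ext t
  simpa using key t.2

theorem primitiveCLM_eq_sub [CompleteSpace E] {T : ℝ} (hT : 0 ≤ T) {k d : C(Set.Icc 0 T, E)}
    (hk : ∀ t : Set.Icc 0 T, HasDerivWithinAt (Set.IccExtend hT k) (d t) (Set.Icc 0 T) t) :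
    primitiveCLM E hT d ⟨T, Set.right_mem_Icc.2 hT⟩ =
      k ⟨T, Set.right_mem_Icc.2 hT⟩ - k ⟨0, Set.left_mem_Icc.2 hT⟩ := by
  rw [primitiveCLM_apply, intervalIntegral.integral_eq_sub_of_hasDeriv_right
    (f := Set.IccExtend hT k) k.continuous.Icc_extend'.continuousOn (fun t ht => ?_)
    (d.continuous.Icc_extend'.intervalIntegrable _ _),
    Set.IccExtend_of_mem hT _ (Set.left_mem_Icc.2 hT),
    Set.IccExtend_of_mem hT _ (Set.right_mem_Icc.2 hT)]
  simp only [min_eq_left hT, max_eq_right hT] at ht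
  have := (hk ⟨t, Set.Ioo_subset_Icc_self ht⟩).Ici_of_Icc (Set.Ioo_subset_Ico_self ht)
  rw [Set.IccExtend_of_mem hT _ (Set.Ioo_subset_Icc_self ht)]
  exact this.mono Set.Ioi_subset_Ici_self

theorem primitiveCLM_applyCLM_const [CompleteSpace E] {T : ℝ} (hT : 0 ≤ T) (B : E →L[ℂ] E)
    (k : C(Set.Icc 0 T, E)) (t : Set.Icc 0 T) :
    primitiveCLM E hT (ContinuousMap.applyCLM (ContinuousMap.const _ B) k) t =
      B (primitiveCLM E hT k t) := by
  rw [primitiveCLM_apply, primitiveCLM_apply, ← B.intervalIntegral_comp_comm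
    (k.continuous.Icc_extend'.intervalIntegrable _ _)]
  rfl

theorem primitiveCLM_const [CompleteSpace E] {T : ℝ} (hT : 0 ≤ T) (w : E) (t : Set.Icc 0 T) :
    primitiveCLM E hT (ContinuousMap.const _ w) t = (t : ℂ) • w := by
  have : Set.IccExtend hT (ContinuousMap.const (Set.Icc 0 T) w) = fun _ => w := rfl
  rw [primitiveCLM_apply, this, intervalIntegral.integral_const, sub_zero]
  exact (Complex.coe_smul _ _).symm

theorem eventually_forall_apply {X K G : Type*} [NormedAddCommGroup G] [TopologicalSpace K] [CompactSpace K]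
    {l : Filter X} {u : X → C(K, G)} (hu : Tendsto u l (𝓝 0)) {Q : G → Prop}
    (hQ : ∀ᶠ y in 𝓝 0, Q y) : ∀ᶠ x in l, ∀ t, Q (u x t) := by
  obtain ⟨ε, hε, hQε⟩ := Metric.eventually_nhds_iff_ball.1 hQ
  filter_upwards [hu.eventually (Metric.ball_mem_nhds 0 hε)] with x hx t
  rw [dist_zero_right] at hx
  exact hQε _ (mem_ball_zero_iff.2 (((u x).norm_coe_le_norm t).trans_lt hx))

end Averaging

section Averaging

variable {E : Type*} [NormedAddCommGroup E] [NormedSpace ℂ E] [CompleteSpace E]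

/-- A vector field commuting with `V` is transported by the flow of `i V`. -/
theorem transport_eq_of_lieBracket_eq_zero {V Z : E → E} {T : ℝ} (hT : 0 ≤ T)
    {u z : C(Set.Icc 0 T, E)} (hV : ∀ t, AnalyticAt ℂ V (u t)) (hZ : ∀ t, AnalyticAt ℂ Z (u t))
    (hu : ∀ t : Set.Icc 0 T, HasDerivWithinAt (Set.IccExtend hT u) (Complex.I • V (u t))
      (Set.Icc 0 T) t)
    (hz : ∀ t : Set.Icc 0 T, HasDerivWithinAt (Set.IccExtend hT z)
      (Complex.I • fderiv ℂ V (u t) (z t)) (Set.Icc 0 T) t)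
    (hVZ : ∀ t, VectorField.lieBracket ℂ V Z (u t) = 0)
    (h0 : z ⟨0, Set.left_mem_Icc.2 hT⟩ = Z (u ⟨0, Set.left_mem_Icc.2 hT⟩)) (t : Set.Icc 0 T) :
    z t = Z (u t) := by
  let y : C(Set.Icc 0 T, E) := ⟨fun t => Z (u t), continuous_iff_continuousAt.2 fun t =>
    (hZ t).continuousAt.comp u.continuous.continuousAt⟩
  suffices z = y from DFunLike.congr_fun this t
  refine eq_of_hasDerivWithinAt_linear hT (L := fun t => fderiv ℂ V (u t))
    (continuous_iff_continuousAt.2 fun t => (hV t).fderiv.continuousAt.comp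
      u.continuous.continuousAt) hz (fun t => ?_) h0
  have h1 : HasFDerivAt Z (fderiv ℂ Z (u t)) (Set.IccExtend hT u t) := by
    rw [Set.IccExtend_val]
    exact (hZ t).differentiableAt.hasFDerivAt
  refine ((h1.restrictScalars ℝ).comp_hasDerivWithinAt (t : ℝ) (hu t)).congr_deriv ?_
  have h2 := hVZ t
  rw [VectorField.lieBracket, sub_eq_zero] at h2
  rw [ContinuousLinearMap.coe_restrictScalars', map_smul, h2]
  rfl

/-- Averaging of a linearizing map over a periodic flow. -/
theorem AnalyticAt.exists_average {A : E →L[ℂ] E} {R : ℝ → E →L[ℂ] E}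
    (hR : IsRotationFlow A R) {V : E → E} (hV : AnalyticAt ℂ V 0) (hV0 : V 0 = 0)
    (hVA : fderiv ℂ V 0 = A) {T : ℝ} (hT : 0 < T) (hRT : R T = ContinuousLinearMap.id ℂ E)
    (hper : ∀ᶠ x in 𝓝 (0 : E), ∃ c : ℝ → E, c 0 = x ∧ c T = x ∧
      (∀ t ∈ Set.Icc 0 T, AnalyticAt ℂ V (c t)) ∧
      ∀ t ∈ Set.Icc 0 T, HasDerivWithinAt c (Complex.I • V (c t)) (Set.Icc 0 T) t)
    {f : E → E} (hf : AnalyticAt ℂ f 0) (hf0 : f 0 = 0)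
    (hfd : fderiv ℂ f 0 = ContinuousLinearMap.id ℂ E) :
    ∃ F : E → E, AnalyticAt ℂ F 0 ∧ F 0 = 0 ∧ fderiv ℂ F 0 = ContinuousLinearMap.id ℂ E ∧
      (∀ᶠ x in 𝓝 0, fderiv ℂ F x (V x) = A (F x)) ∧
      ∀ (Z : E → E) (B : E →L[ℂ] E), AnalyticAt ℂ Z 0 → (∀ t, B ∘L R t = R t ∘L B) →
        (∀ᶠ x in 𝓝 0, VectorField.lieBracket ℂ V Z x = 0) →
        (∀ᶠ x in 𝓝 0, fderiv ℂ f x (Z x) = B (f x)) →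
        ∀ᶠ x in 𝓝 0, fderiv ℂ F x (Z x) = B (F x) := by
  obtain ⟨u, hu, hu0, hud0, huV⟩ := hV.exists_flow hR hV0 hVA hT.le
  obtain ⟨Φ, hΦ, hΦu⟩ := hf.exists_superposition_fderiv (K := Set.Icc 0 T)
  set M' := hR.invOperator T with hM'
  let e : C(Set.Icc 0 T, E) →L[ℂ] E :=
    (T : ℂ)⁻¹ • (ContinuousMap.evalCLM ℂ ⟨T, Set.right_mem_Icc.2 hT.le⟩ ∘L primitiveCLM E hT.le)
  have he : ∀ k, e k = (T : ℂ)⁻¹ • primitiveCLM E hT.le k ⟨T, Set.right_mem_Icc.2 hT.le⟩ :=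
    fun k => rfl
  have heB : ∀ (B : E →L[ℂ] E) k,
      e (ContinuousMap.applyCLM (ContinuousMap.const _ B) k) = B (e k) := by
    intro B k
    rw [he, he, primitiveCLM_applyCLM_const, map_smul]
  let F : E → E := fun x => e (M' (Φ (u x)))
  have hut : Tendsto u (𝓝 0) (𝓝 0) := by simpa [hu0] using hu.continuousAt.tendsto
  have hF : AnalyticAt ℂ F 0 := by
    refine (e.analyticAt _).fun_comp ((M'.analyticAt _).fun_comp ?_)
    exact AnalyticAt.fun_comp (g := Φ) (by rwa [hu0]) hu
  have hFd : ∀ᶠ x in 𝓝 0, ∀ w, fderiv ℂ F x w = e (M' (fderiv ℂ Φ (u x) (fderiv ℂ u x w))) := by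
    filter_upwards [hut.eventually hΦu, hu.eventually_analyticAt] with x hx hx' w
    have h1 : HasFDerivAt F (e ∘L M' ∘L (fderiv ℂ Φ (u x) ∘L fderiv ℂ u x)) x :=
      e.hasFDerivAt.comp x (M'.hasFDerivAt.comp x
        (hx.1.differentiableAt.hasFDerivAt.comp x hx'.differentiableAt.hasFDerivAt))
    rw [h1.fderiv]
    rfl
  have hTc : (T : ℂ) ≠ 0 := by exact_mod_cast hT.ne'
  have htrans : ∀ Z : E → E, AnalyticAt ℂ Z 0 →
      (∀ᶠ x in 𝓝 0, VectorField.lieBracket ℂ V Z x = 0) →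
      ∀ᶠ x in 𝓝 0, ∀ t, fderiv ℂ u x (Z x) t = Z (u x t) := by
    intro Z hZ hVZ
    filter_upwards [huV, eventually_forall_apply hut hZ.eventually_analyticAt,
      eventually_forall_apply hut hVZ] with x hx hxZ hxVZ t
    obtain ⟨⟨h1, h2, h3⟩, h4⟩ := hx
    refine transport_eq_of_lieBracket_eq_zero hT.le h2 hxZ h3 (h4 (Z x)).2 hxVZ ?_ t
    rw [(h4 (Z x)).1, h1]
  refine ⟨F, hF, ?_, ?_, ?_, ?_⟩
  · have : Φ 0 = 0 := by
      ext t
      simpa [hf0] using hΦu.self_of_nhds.2.2.1 t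
    simp [F, hu0, this]
  · ext w
    rw [hFd.self_of_nhds]
    have : M' (fderiv ℂ Φ (u 0) (fderiv ℂ u 0 w)) = ContinuousMap.const _ w := by
      ext t
      have := hΦu.self_of_nhds.2.2.2 (fderiv ℂ u 0 w) t
      simp only [ContinuousMap.zero_apply, hfd] at this
      rw [hM', hR.invOperator_apply, hu0, this, hud0]
      exact hR.neg_apply t w
    rw [this, he, primitiveCLM_const, inv_smul_smul₀ hTc]
    rfl
  · filter_upwards [hFd, hut.eventually hΦu, huV, hper,
      htrans V hV (Eventually.of_forall fun x => by simp)] with x hxd hxΦ hxu hxc hxt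
    obtain ⟨⟨h1, h2, h3⟩, -⟩ := hxu
    obtain ⟨c, hc0, hcT, hcV, hc⟩ := hxc
    have huT : u x ⟨T, Set.right_mem_Icc.2 hT.le⟩ = x := by
      have h5 : Set.EqOn (Set.IccExtend hT.le (u x)) c (Set.Icc 0 T) := by
        refine eqOn_of_hasDerivWithinAt_analytic (V := V) (fun t ht => ?_) hc (fun t ht => ?_) hcV ?_
        · have := h3 ⟨t, ht⟩
          rwa [← Set.IccExtend_of_mem hT.le (u x) ht] at this
        · rw [Set.IccExtend_of_mem hT.le (u x) ht]
          exact h2 _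
        · rw [Set.IccExtend_of_mem hT.le (u x) (Set.left_mem_Icc.2 hT.le), h1, hc0]
      have := h5 (Set.right_mem_Icc.2 hT.le)
      rwa [hcT, Set.IccExtend_of_mem hT.le (u x) (Set.right_mem_Icc.2 hT.le)] at this
    set k := M' (Φ (u x)) with hk
    set d := M' (fderiv ℂ Φ (u x) (fderiv ℂ u x (V x))) with hd
    have hkd : ∀ t : Set.Icc 0 T, HasDerivWithinAt (Set.IccExtend hT.le k)
        ((Complex.I • (d - ContinuousMap.applyCLM (ContinuousMap.const _ A) k)) t)
        (Set.Icc 0 T) t := by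
      intro t
      have h4 : HasFDerivAt f (fderiv ℂ f (u x t)) (Set.IccExtend hT.le (u x) t) := by
        rw [Set.IccExtend_val]
        exact (hxΦ.2.1 t).differentiableAt.hasFDerivAt
      have h5 := (h4.restrictScalars ℝ).comp_hasDerivWithinAt (t : ℝ) (h3 t)
      have h6 := (hR.hasDerivAt (-t)).scomp (t : ℝ) (hasDerivAt_neg (t : ℝ))
      refine ((h6.hasDerivWithinAt.complex_clm_apply h5).congr_deriv ?_).congr (fun s hs => ?_) ?_
      · simp [hk, hd, hM', hxΦ.2.2.1, hxΦ.2.2.2, hxt, smul_sub]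
        abel
      · simp [Set.IccExtend_of_mem hT.le _ hs, hk, hM', hxΦ.2.2.1]
      · simp [hk, hM', hxΦ.2.2.1]
    have h7 := primitiveCLM_eq_sub hT.le hkd
    have h8 : k ⟨T, Set.right_mem_Icc.2 hT.le⟩ = k ⟨0, Set.left_mem_Icc.2 hT.le⟩ := by
      have : R (-T) = ContinuousLinearMap.id ℂ E := by
        simpa [hRT] using hR.neg_comp T
      simp [hk, hM', hxΦ.2.2.1, h1, huT, this, hR.zero]
    have h9 : e (Complex.I • (d - ContinuousMap.applyCLM (ContinuousMap.const _ A) k)) = 0 := by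
      rw [he, h7, h8, sub_self, smul_zero]
    rw [map_smul, smul_eq_zero_iff_right Complex.I_ne_zero, map_sub, sub_eq_zero, heB] at h9
    rw [hxd, ← hd, h9]
  · intro Z B hZ hB hVZ hfZ
    filter_upwards [hFd, hut.eventually hΦu, htrans Z hZ hVZ, eventually_forall_apply hut hfZ]
      with x hxd hxΦ hxt hxf
    rw [hxd, ← heB]
    congr 1
    ext t
    have := DFunLike.congr_fun (hB (-t)) (f (u x t))
    simp only [ContinuousLinearMap.comp_apply] at this
    simp [hM', hxΦ.2.2.1, hxΦ.2.2.2, hxt, hxf, this]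

end Averaging

section Diagonal

variable {n : ℕ}

@[simp]
theorem diagCLM_apply (γ x : Fin n → ℂ) (j : Fin n) : diagCLM γ x j = γ j * x j := by
  simp [diagCLM, Matrix.mulVec_diagonal]

theorem diagCLM_comp (γ δ : Fin n → ℂ) : diagCLM γ ∘L diagCLM δ = diagCLM (γ * δ) := by
  ext x j
  simp [mul_assoc]

theorem diagCLM_one : diagCLM (1 : Fin n → ℂ) = ContinuousLinearMap.id ℂ (Fin n → ℂ) := by
  ext x j
  simp

theorem trace_diagCLM (γ : Fin n → ℂ) :
    LinearMap.trace ℂ (Fin n → ℂ) (diagCLM γ : (Fin n → ℂ) →ₗ[ℂ] (Fin n → ℂ)) = ∑ j, γ j := by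
  simp [diagCLM, Matrix.trace]

theorem diagCLM_comm (γ δ : Fin n → ℂ) : diagCLM γ ∘L diagCLM δ = diagCLM δ ∘L diagCLM γ := by
  rw [diagCLM_comp, diagCLM_comp, mul_comm]

/-- The flow at time `t` of `i` times the diagonal field with weights `ρ`. -/
noncomputable def torusRotation (ρ : Fin n → ℤ) (t : ℝ) : (Fin n → ℂ) →L[ℂ] (Fin n → ℂ) :=
  diagCLM fun j => Complex.exp (t * (Complex.I * ρ j))

theorem hasDerivAt_diagCLM {g : ℝ → Fin n → ℂ} {g' : Fin n → ℂ} {t : ℝ} (hg : HasDerivAt g g' t) :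
    HasDerivAt (fun t => diagCLM (g t)) (diagCLM g') t := by
  let D : (Fin n → ℂ) →ₗ[ℂ] ((Fin n → ℂ) →L[ℂ] (Fin n → ℂ)) :=
    { toFun := diagCLM
      map_add' := fun a b => by ext x j; simp [add_mul]
      map_smul' := fun c a => by ext x j; simp [mul_assoc] }
  exact ((LinearMap.toContinuousLinearMap D).hasFDerivAt.restrictScalars ℝ).comp_hasDerivAt t hg

theorem torusRotation_add (ρ : Fin n → ℤ) (s t : ℝ) :
    torusRotation ρ s ∘L torusRotation ρ t = torusRotation ρ (s + t) := by
  rw [torusRotation, torusRotation, diagCLM_comp, torusRotation]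
  congr 1
  ext j
  rw [Pi.mul_apply, ← Complex.exp_add]
  push_cast
  ring_nf

theorem torusRotation_zero (ρ : Fin n → ℤ) :
    torusRotation ρ 0 = ContinuousLinearMap.id ℂ (Fin n → ℂ) := by
  rw [← diagCLM_one, torusRotation]
  congr 1
  ext j
  simp

theorem torusRotation_two_pi (ρ : Fin n → ℤ) :
    torusRotation ρ (2 * Real.pi) = ContinuousLinearMap.id ℂ (Fin n → ℂ) := by
  rw [← diagCLM_one, torusRotation]
  congr 1
  ext j
  rw [Pi.one_apply, Complex.exp_eq_one_iff]
  exact ⟨ρ j, by push_cast; ring⟩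

theorem isRotationFlow_torusRotation (ρ : Fin n → ℤ) :
    IsRotationFlow (diagCLM fun j => (ρ j : ℂ)) (torusRotation ρ) where
  zero := torusRotation_zero ρ
  neg_comp t := by rw [torusRotation_add, neg_add_cancel, torusRotation_zero]
  comm t := diagCLM_comm _ _
  hasDerivAt t := by
    refine (hasDerivAt_diagCLM (g' := fun j => Complex.exp (t * (Complex.I * ρ j)) *
      (Complex.I * ρ j)) (hasDerivAt_pi.2 fun j => ?_)).congr_deriv ?_
    · simpa using (((hasDerivAt_id (t : ℂ)).mul_const (Complex.I * ρ j)).cexp).comp_ofReal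
    · ext x j
      simp [torusRotation]
      ring

theorem norm_torusRotation_apply (ρ : Fin n → ℤ) (t : ℝ) (x : Fin n → ℂ) : ‖torusRotation ρ t x‖ = ‖x‖ := by
  have key : ∀ j, ‖torusRotation ρ t x j‖ = ‖x j‖ := fun j => by
    have : (t : ℂ) * (Complex.I * ρ j) = ((t * ρ j : ℝ) : ℂ) * Complex.I := by
      push_cast
      ring
    rw [torusRotation, diagCLM_apply, norm_mul, this, Complex.norm_exp_ofReal_mul_I, one_mul]
  exact le_antisymm
    ((pi_norm_le_iff_of_nonneg (norm_nonneg _)).2 fun j =>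
      (key j).trans_le (norm_le_pi_norm x j))
    ((pi_norm_le_iff_of_nonneg (norm_nonneg _)).2 fun j =>
      (key j).symm.trans_le (norm_le_pi_norm (torusRotation ρ t x) j))

end Diagonal

/-- Commuting vector fields generating a torus action are simultaneously linearizable. -/
theorem exists_simultaneous_linearization {n r : ℕ} {V : Fin r → (Fin n → ℂ) → (Fin n → ℂ)}
    {ρ : Fin r → Fin n → ℤ} (hV : ∀ k, AnalyticAt ℂ (V k) 0) (hV0 : ∀ k, V k 0 = 0)
    (hVd : ∀ k, fderiv ℂ (V k) 0 = diagCLM fun j => (ρ k j : ℂ))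
    (hcomm : ∀ j k, ∀ᶠ x in 𝓝 0, VectorField.lieBracket ℂ (V j) (V k) x = 0)
    (hper : ∀ k, ∀ᶠ x in 𝓝 (0 : Fin n → ℂ), ∃ c : ℝ → Fin n → ℂ, c 0 = x ∧
      c (2 * Real.pi) = x ∧ (∀ t, AnalyticAt ℂ (V k) (c t)) ∧
      ∀ t, HasDerivAt c (Complex.I • V k (c t)) t) :
    ∃ f : (Fin n → ℂ) → (Fin n → ℂ), AnalyticAt ℂ f 0 ∧ f 0 = 0 ∧
      fderiv ℂ f 0 = ContinuousLinearMap.id ℂ _ ∧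
      ∀ k, ∀ᶠ x in 𝓝 0, fderiv ℂ f x (V k x) = diagCLM (fun j => (ρ k j : ℂ)) (f x) := by
  suffices ∀ s : Finset (Fin r), ∃ f : (Fin n → ℂ) → (Fin n → ℂ), AnalyticAt ℂ f 0 ∧ f 0 = 0 ∧
      fderiv ℂ f 0 = ContinuousLinearMap.id ℂ _ ∧
      ∀ k ∈ s, ∀ᶠ x in 𝓝 0, fderiv ℂ f x (V k x) = diagCLM (fun j => (ρ k j : ℂ)) (f x) by
    simpa using this Finset.univ
  intro s
  induction s using Finset.induction_on with
  | empty => exact ⟨id, analyticAt_id, rfl, fderiv_id, by simp⟩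
  | insert k s _ ih =>
    obtain ⟨f, hf, hf0, hfd, hfs⟩ := ih
    obtain ⟨F, hF, hF0, hFd, hFk, hFZ⟩ := AnalyticAt.exists_average (isRotationFlow_torusRotation (ρ k))
      (hV k) (hV0 k) (hVd k) Real.two_pi_pos (torusRotation_two_pi _)
      ((hper k).mono fun x ⟨c, h0, h1, h2, h3⟩ =>
        ⟨c, h0, h1, fun t _ => h2 t, fun t _ => (h3 t).hasDerivWithinAt⟩) hf hf0 hfd
    refine ⟨F, hF, hF0, hFd, fun j hj => ?_⟩
    rcases Finset.mem_insert.1 hj with rfl | hj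
    · exact hFk
    · exact hFZ (V j) _ (hV j) (fun t => diagCLM_comm _ _) (hcomm k j) (hfs j hj)

section VolumeCorrection

variable {n : ℕ}

theorem diagCLM_single_apply (i : Fin n) (y : Fin n → ℂ) :
    diagCLM (Pi.single i 1) y = y i • Pi.single i (1 : ℂ) := by
  ext j
  by_cases h : j = i <;> simp [h]

/-- A map with prescribed Jacobian determinant, equivariant under the diagonal symmetries of that
determinant. -/
theorem exists_map_with_det_fderiv {J : (Fin n → ℂ) → ℂ} (hJ : AnalyticAt ℂ J 0) (hJ0 : J 0 = 1) :
    ∃ h : (Fin n → ℂ) → (Fin n → ℂ), AnalyticAt ℂ h 0 ∧ h 0 = 0 ∧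
      fderiv ℂ h 0 = ContinuousLinearMap.id ℂ _ ∧
      (∀ᶠ y in 𝓝 0, LinearMap.det (fderiv ℂ h y : (Fin n → ℂ) →ₗ[ℂ] (Fin n → ℂ)) = J y) ∧
      ∀ γ : Fin n → ℂ, (∀ᶠ y in 𝓝 0, fderiv ℂ J y (diagCLM γ y) = 0) →
        ∀ᶠ y in 𝓝 0, fderiv ℂ h y (diagCLM γ y) = diagCLM γ (h y) := by
  rcases isEmpty_or_nonempty (Fin n) with hn | ⟨⟨i⟩⟩
  · refine ⟨id, analyticAt_id, rfl, fderiv_id, Eventually.of_forall fun y => ?_,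
      fun γ _ => Eventually.of_forall fun y => ?_⟩
    · rw [Subsingleton.elim y 0, hJ0, fderiv_id]
      exact LinearMap.det_id
    · simp
  set D : (Fin n → ℂ) →L[ℂ] (Fin n → ℂ) := diagCLM (Pi.single i 1) with hD
  have hDD : ∀ y, D (D y) = D y := fun y => by
    ext j
    by_cases h : j = i <;> simp [hD, h]
  let Q : C(Set.Icc (0 : ℝ) 1, (Fin n → ℂ) →L[ℂ] (Fin n → ℂ)) :=
    ⟨fun s => ContinuousLinearMap.id ℂ _ + ((s : ℝ) - 1 : ℂ) • D, by fun_prop⟩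
  let σ : (Fin n → ℂ) →L[ℂ] C(Set.Icc (0 : ℝ) 1, Fin n → ℂ) :=
    Q.applyCLM ∘L ContinuousLinearMap.const ℂ (Set.Icc (0 : ℝ) 1)
  have hσ : ∀ y s, σ y s = y + ((s : ℝ) - 1 : ℂ) • D y := fun y s => rfl
  obtain ⟨Φ, hΦ, hΦu⟩ := hJ.exists_superposition_fderiv (K := Set.Icc (0 : ℝ) 1)
  let e : C(Set.Icc (0 : ℝ) 1, ℂ) →L[ℂ] ℂ :=
    ContinuousMap.evalCLM ℂ ⟨1, Set.right_mem_Icc.2 zero_le_one⟩ ∘L primitiveCLM ℂ zero_le_one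
  have he : ∀ k, e k = primitiveCLM ℂ zero_le_one k ⟨1, Set.right_mem_Icc.2 zero_le_one⟩ :=
    fun k => rfl
  let w : (Fin n → ℂ) → ℂ := fun y => e (Φ (σ y))
  have hσt : Tendsto σ (𝓝 0) (𝓝 0) := by simpa using σ.continuous.tendsto 0
  have hw : AnalyticAt ℂ w 0 := (e.analyticAt _).fun_comp
    (AnalyticAt.fun_comp (g := Φ) (by simpa using hΦ) (σ.analyticAt 0))
  have hwd : ∀ᶠ y in 𝓝 0, HasFDerivAt w (e ∘L fderiv ℂ Φ (σ y) ∘L σ) y := by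
    filter_upwards [hσt.eventually hΦu] with y hy
    exact e.hasFDerivAt.comp y (hy.1.differentiableAt.hasFDerivAt.comp y σ.hasFDerivAt)
  have hw0 : w 0 = 1 := by
    have : Φ (σ 0) = ContinuousMap.const _ 1 := by
      ext s
      rw [map_zero, hΦu.self_of_nhds.2.2.1]
      simpa using hJ0
    simp only [w, this, he, primitiveCLM_const]
    simp
  let h : (Fin n → ℂ) → (Fin n → ℂ) := fun y => y + (w y - 1) • D y
  have hh : AnalyticAt ℂ h 0 :=
    analyticAt_id.fun_add ((hw.fun_sub analyticAt_const).fun_smul (D.analyticAt 0))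
  have hhd : ∀ᶠ y in 𝓝 0, ∀ z, fderiv ℂ h y z = z + (w y - 1) • D z +
      e (fderiv ℂ Φ (σ y) (σ z)) • D y := by
    filter_upwards [hwd] with y hy z
    have h1 : HasFDerivAt h _ y :=
      (hasFDerivAt_id y).fun_add ((hy.sub_const 1).fun_smul (D.hasFDerivAt (x := y)))
    rw [h1.fderiv]
    simp [add_assoc]
  refine ⟨h, hh, by simp [h], ?_, ?_, fun γ hγ => ?_⟩
  · ext z : 1
    rw [hhd.self_of_nhds]
    simp [hw0]
  · filter_upwards [hhd, hσt.eventually hΦu] with y hy hyΦ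
    let ℓ : (Fin n → ℂ) →ₗ[ℂ] ℂ := (w y - 1) • LinearMap.proj i +
      y i • ((e ∘L fderiv ℂ Φ (σ y) ∘L σ : (Fin n → ℂ) →L[ℂ] ℂ) : (Fin n → ℂ) →ₗ[ℂ] ℂ)
    have h1 : (fderiv ℂ h y : (Fin n → ℂ) →ₗ[ℂ] (Fin n → ℂ)) =
        LinearMap.transvection ℓ (Pi.single i 1) := by
      refine LinearMap.ext fun z => ?_
      rw [ContinuousLinearMap.coe_coe, hy, LinearMap.transvection.apply, hD, diagCLM_single_apply,
        diagCLM_single_apply]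
      simp only [ℓ, LinearMap.add_apply, LinearMap.smul_apply, LinearMap.proj_apply,
        ContinuousLinearMap.coe_coe, ContinuousLinearMap.comp_apply, smul_eq_mul, add_smul,
        smul_smul, add_assoc]
      ring_nf
    have h2 : 1 + ℓ (Pi.single i 1) = e (Φ (σ y) + fderiv ℂ Φ (σ y) (σ (D y))) := by
      rw [hD, diagCLM_single_apply, map_smul, map_smul, map_add, map_smul]
      simp [ℓ, w]
      ring
    let k : C(Set.Icc (0 : ℝ) 1, ℂ) := ⟨fun s => (s : ℝ), by fun_prop⟩ * Φ (σ y)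
    have hk : ∀ t : Set.Icc (0 : ℝ) 1, HasDerivWithinAt (Set.IccExtend zero_le_one k)
        ((Φ (σ y) + fderiv ℂ Φ (σ y) (σ (D y))) t) (Set.Icc 0 1) t := by
      intro t
      have h3 : HasFDerivAt J (fderiv ℂ J (σ y t)) (y + ((t : ℝ) - 1 : ℂ) • D y) :=
        (hyΦ.2.1 t).differentiableAt.hasFDerivAt
      have h4 : HasDerivAt (fun s : ℂ => y + (s - 1) • D y) (D y) (t : ℝ) := by
        simpa using (((hasDerivAt_id ((t : ℝ) : ℂ)).sub_const 1).smul_const (D y)).const_add y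
      have h5 := ((hasDerivAt_id ((t : ℝ) : ℂ)).mul (h3.comp_hasDerivAt _ h4)).comp_ofReal
      refine (h5.hasDerivWithinAt.congr_deriv ?_).congr (fun s hs => ?_) ?_
      · rw [ContinuousMap.add_apply, hyΦ.2.2.1, hyΦ.2.2.2]
        rw [hσ (D y), hDD, ← one_smul ℂ (D y), smul_smul, ← add_smul, one_smul]
        simp [hσ]
      · simp [Set.IccExtend_of_mem zero_le_one _ hs, k, hyΦ.2.2.1, hσ]
      · simp [k, hyΦ.2.2.1, hσ]
    rw [h1, LinearMap.transvection.det, h2, he, primitiveCLM_eq_sub zero_le_one hk]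
    simp [k, hyΦ.2.2.1, hσ]
  · filter_upwards [hhd, hσt.eventually hΦu, eventually_forall_apply hσt hγ] with y hy hyΦ hyγ
    have h1 : fderiv ℂ Φ (σ y) (σ (diagCLM γ y)) = 0 := by
      ext s
      rw [hyΦ.2.2.2, ContinuousMap.zero_apply, ← hyγ s, hσ, hσ]
      congr 1
      ext j
      simp [hD]
      ring
    rw [hy, h1]
    ext j
    simp [hD, h]
    ring

end VolumeCorrection

theorem AnalyticAt.complex_clm_apply {E F G : Type*} [NormedAddCommGroup E] [NormedSpace ℂ E]
    [NormedAddCommGroup F] [NormedSpace ℂ F] [NormedAddCommGroup G] [NormedSpace ℂ G]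
    {L : E → F →L[ℂ] G} {v : E → F} {x : E} (hL : AnalyticAt ℂ L x) (hv : AnalyticAt ℂ v x) :
    AnalyticAt ℂ (fun y => L y (v y)) x :=
  AnalyticAt.fun_comp (g := fun p : (F →L[ℂ] G) × F => p.1 p.2)
    (f := fun y => (L y, v y))
    ((ContinuousLinearMap.id ℂ (F →L[ℂ] G)).analyticAt_bilinear (L x, v x)) (hL.prod hv)

section Resonance

variable {n : ℕ}

theorem fderiv_fderiv_diagCLM_apply {f : (Fin n → ℂ) → ℂ} {x : Fin n → ℂ} (hf : AnalyticAt ℂ f x)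
    (ρ : Fin n → ℂ) (i : Fin n) :
    fderiv ℂ (fun y => fderiv ℂ f y (diagCLM ρ y)) x (Pi.single i 1) =
      fderiv ℂ (fun y => fderiv ℂ f y (Pi.single i 1)) x (diagCLM ρ x) +
        ρ i * fderiv ℂ f x (Pi.single i 1) := by
  have hd := hf.fderiv.differentiableAt
  have hsymm : IsSymmSndFDerivAt ℂ f x := hf.contDiffAt.isSymmSndFDerivAt (n := 2) (by simp)
  rw [fderiv_clm_apply hd (diagCLM ρ).differentiableAt,
    fderiv_clm_apply hd (differentiableAt_const _)]
  have : diagCLM ρ (Pi.single i 1) = ρ i • Pi.single i (1 : ℂ) := by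
    ext j
    by_cases h : j = i <;> simp [h]
  simp [this, hsymm.eq, add_comm]

theorem eventually_eq_zero_of_iteratedFDeriv_eq_zero {f : (Fin n → ℂ) → ℂ}
    (hf : AnalyticAt ℂ f 0) (h : ∀ m, iteratedFDeriv ℂ m f 0 = 0) : ∀ᶠ x in 𝓝 0, f x = 0 := by
  obtain ⟨p, r, hp⟩ := hf
  filter_upwards [Metric.eball_mem_nhds 0 hp.r_pos] with x hx
  have := hp.hasSum_iteratedFDeriv hx
  simp only [h, zero_apply, smul_zero, zero_add] at this
  exact this.unique hasSum_zero

theorem iteratedFDeriv_succ_eq_zero {f : (Fin n → ℂ) → ℂ} {x : Fin n → ℂ} (hf : AnalyticAt ℂ f x)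
    {m : ℕ} (h : ∀ i, iteratedFDeriv ℂ m (fun y => fderiv ℂ f y (Pi.single i 1)) x = 0) :
    iteratedFDeriv ℂ (m + 1) f x = 0 := by
  ext v
  rw [iteratedFDeriv_succ_apply_right, pi_eq_sum_univ' (v (Fin.last m)), map_sum]
  refine Finset.sum_eq_zero fun i _ => ?_
  have h1 := (ContinuousLinearMap.apply ℂ ℂ (Pi.single i (1 : ℂ))).iteratedFDeriv_comp_left
    hf.fderiv.contDiffAt (i := m) (n := m) le_rfl
  have h2 := DFunLike.congr_fun (h1.symm.trans (h i)) (Fin.init v)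
  rw [map_smul]
  exact smul_eq_zero_of_right _ h2

/-- An eigenfunction of a diagonal derivation with weights `γ` is an eigenfunction of every
diagonal derivation whose weights satisfy the same resonances. -/
theorem eventually_diagonal_eigenfunction (γ ρ : Fin n → ℂ) (f : (Fin n → ℂ) → ℂ) (a b : ℂ)
    (hf : AnalyticAt ℂ f 0) (hres : ∀ m : Fin n → ℕ, a = ∑ i, m i * γ i → b = ∑ i, m i * ρ i)
    (hfγ : ∀ᶠ x in 𝓝 0, fderiv ℂ f x (diagCLM γ x) = a * f x) :
    ∀ᶠ x in 𝓝 0, fderiv ℂ f x (diagCLM ρ x) = b * f x := by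
  have han : ∀ (f : (Fin n → ℂ) → ℂ) x (b : ℂ), AnalyticAt ℂ f x →
      AnalyticAt ℂ (fun x => fderiv ℂ f x (diagCLM ρ x) - b * f x) x := fun f x b hf =>
    ((AnalyticAt.fderiv hf).complex_clm_apply ((diagCLM ρ).analyticAt x)).fun_sub (analyticAt_const.fun_mul hf)
  suffices ∀ᶠ x in 𝓝 0, fderiv ℂ f x (diagCLM ρ x) - b * f x = 0 from
    this.mono fun x hx => sub_eq_zero.1 hx
  refine eventually_eq_zero_of_iteratedFDeriv_eq_zero (han f 0 b hf) fun m => ?_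
  induction m generalizing f a b with
  | zero =>
    ext v
    have h0 := hfγ.self_of_nhds
    simp only [map_zero] at h0
    rcases mul_eq_zero.1 h0.symm with h1 | h1
    · have := hres 0 (by simp [h1])
      simp at this
      simp [this]
    · simp [h1]
  | succ m ih =>
    refine iteratedFDeriv_succ_eq_zero (han f 0 b hf) fun i => ?_
    have hpart : ∀ (ρ : Fin n → ℂ) (b : ℂ), ∀ᶠ x in 𝓝 0,
        fderiv ℂ (fun x => fderiv ℂ f x (diagCLM ρ x) - b * f x) x (Pi.single i 1) =
        fderiv ℂ (fun y => fderiv ℂ f y (Pi.single i 1)) x (diagCLM ρ x) -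
          (b - ρ i) * fderiv ℂ f x (Pi.single i 1) := by
      intro ρ b
      filter_upwards [hf.eventually_analyticAt] with x hx
      rw [fderiv_fun_sub ((AnalyticAt.fderiv hx).complex_clm_apply ((diagCLM ρ).analyticAt x)).differentiableAt
        (hx.differentiableAt.const_mul b), sub_apply, fderiv_fderiv_diagCLM_apply hx,
        fderiv_const_mul hx.differentiableAt, smul_apply, smul_eq_mul]
      ring
    rw [(EventuallyEq.iteratedFDeriv ℂ (hpart ρ b) m).self_of_nhds]
    refine ih _ (a - γ i) (b - ρ i) ((AnalyticAt.fderiv hf).complex_clm_apply analyticAt_const) (fun k hk => ?_) ?_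
    · have := hres (k + Pi.single i 1) (by
        simp [add_mul, Finset.sum_add_distrib, ← hk, Pi.single_apply])
      simp only [Pi.add_apply, Nat.cast_add, add_mul, Finset.sum_add_distrib] at this
      simp [this, Pi.single_apply]
    · filter_upwards [hpart γ a, hfγ.eventually_nhds] with x hx hx'
      rw [← sub_eq_zero, ← hx]
      have : (fun x => fderiv ℂ f x (diagCLM γ x) - a * f x) =ᶠ[𝓝 x] fun _ => 0 :=
        hx'.mono fun y hy => sub_eq_zero.2 hy
      rw [EventuallyEq.fderiv_eq (𝕜 := ℂ) this]
      simp

theorem eq_sum_of_mem_QLattice {γ : Fin n → ℂ} {ρ : Fin n → ℤ} (hρ : ρ ∈ QLattice γ) (j : Fin n)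
    (m : Fin n → ℕ) (hm : γ j = ∑ i, m i * γ i) : (ρ j : ℂ) = ∑ i, m i * (ρ i : ℂ) := by
  suffices ρ j = ∑ i, m i * ρ i by
    rw [this]
    push_cast
    rfl
  obtain ⟨hres, heq⟩ := hρ
  rcases Nat.lt_or_ge 1 (∑ i, m i) with h | h
  · have h1 := hres (fun i => m i - Pi.single (M := fun _ => ℤ) j 1 i) ⟨?_, fun i => ?_, ?_, fun i k hi hk => ?_⟩
    · simp only [mul_sub, Finset.sum_sub_distrib, Pi.single_apply, mul_ite, mul_one, mul_zero,
        Finset.sum_ite_eq', Finset.mem_univ, if_true, sub_eq_zero] at h1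
      rw [← h1]
      exact Finset.sum_congr rfl fun i _ => mul_comm _ _
    · push_cast
      simp only [sub_mul, Finset.sum_sub_distrib, Pi.single_apply, ← hm]
      simp
    · have : Pi.single (M := fun _ => ℤ) j 1 i ≤ 1 := by
        rw [Pi.single_apply]
        split_ifs <;> simp
      dsimp only
      omega
    · simp only [Finset.sum_sub_distrib, Finset.sum_pi_single', Finset.mem_univ, if_true]
      have : (1 : ℤ) < ∑ i, (m i : ℤ) := by exact_mod_cast h
      omega
    · have key : ∀ i, (m i : ℤ) - Pi.single (M := fun _ => ℤ) j 1 i < 0 → i = j := fun i hi => by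
        by_contra hij
        simp [hij] at hi
        omega
      rw [key i hi, key k hk]
  · interval_cases h2 : ∑ i, m i
    · have hm0 : ∀ i, m i = 0 := fun i => (Finset.sum_eq_zero_iff.1 h2) i (Finset.mem_univ i)
      have h1 := hres (Pi.single j 1) ⟨?_, fun i => ?_, ?_, fun i k hi => ?_⟩
      · simpa [hm0, Pi.single_apply] using h1
      · simpa [hm0, Pi.single_apply] using hm
      · rw [Pi.single_apply]
        split_ifs <;> simp
      · simp
      · rw [Pi.single_apply] at hi
        split_ifs at hi <;> omega
    · obtain ⟨i, hi⟩ : ∃ i, m i ≠ 0 := by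
        by_contra! hcon
        simp [hcon] at h2
      have hmi : m = Pi.single i 1 := by
        have h3 := Finset.add_sum_erase Finset.univ m (Finset.mem_univ i)
        have h4 : ∑ k ∈ Finset.univ.erase i, m k = 0 := by omega
        ext k
        by_cases hk : k = i
        · subst hk
          simp
          omega
        · simpa [hk] using (Finset.sum_eq_zero_iff.1 h4) k (by simp [hk])
      have h3 := heq j i (by simpa [hmi, Pi.single_apply] using hm)
      simp [hmi, Pi.single_apply, h3]

/-- A field commuting with `diag γ` commutes with all `diag ρ`, `ρ ∈ Q(γ)`. -/
theorem eventually_lieBracket_diagCLM_eq_zero {γ : Fin n → ℂ} {ρ : Fin n → ℤ}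
    (hρ : ρ ∈ QLattice γ) {Y : (Fin n → ℂ) → (Fin n → ℂ)} (hY : AnalyticAt ℂ Y 0)
    (h : ∀ᶠ x in 𝓝 0, VectorField.lieBracket ℂ Y (diagCLM γ) x = 0) :
    ∀ᶠ x in 𝓝 0, VectorField.lieBracket ℂ Y (diagCLM fun j => (ρ j : ℂ)) x = 0 := by
  have key : ∀ j, ∀ᶠ x in 𝓝 0, fderiv ℂ (fun y => Y y j) x (diagCLM (fun j => (ρ j : ℂ)) x) =
      ρ j * Y x j := fun j => by
    refine eventually_diagonal_eigenfunction γ _ (fun y => Y y j) (γ j) (ρ j)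
      (analyticAt_pi_iff.1 hY j) (eq_sum_of_mem_QLattice hρ j) ?_
    filter_upwards [h, hY.eventually_analyticAt] with x hx hxY
    have := congrFun hx j
    rw [VectorField.lieBracket, ContinuousLinearMap.fderiv, Pi.sub_apply, diagCLM_apply,
      Pi.zero_apply, sub_eq_zero] at this
    rw [this, fderiv_apply hxY.differentiableAt]
    rfl
  filter_upwards [eventually_all.2 key, hY.eventually_analyticAt] with x hx hxY
  ext j
  rw [VectorField.lieBracket, ContinuousLinearMap.fderiv, Pi.sub_apply, diagCLM_apply,
    Pi.zero_apply, sub_eq_zero, ← hx j, fderiv_apply hxY.differentiableAt]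
  rfl

theorem sum_eq_zero_of_mem_QLattice {γ : Fin n → ℂ} (hγ : ∑ j, γ j = 0) {ρ : Fin n → ℤ}
    (hρ : ρ ∈ QLattice γ) : ∑ j, ρ j = 0 := by
  rcases Nat.eq_zero_or_pos n with rfl | hn
  · simp
  · simpa using hρ.1 (fun _ => 1) ⟨by simpa using hγ, by simp, by simpa using Nat.succ_le_of_lt hn, by simp⟩

theorem mem_span_of_basis_QLattice {γ : Fin n → ℂ} {r : ℕ} {ρ : Fin r → Fin n → ℤ}
    (hρ : ∀ σ ∈ QLattice γ, ∃ a : Fin r → ℤ, ∑ k, a k • ρ k = σ) :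
    ∃ a : Fin r → ℂ, ∀ j, γ j = ∑ k, a k * (ρ k j : ℂ) := by
  suffices γ ∈ Submodule.span ℂ (Set.range fun k j => (ρ k j : ℂ)) by
    obtain ⟨a, ha⟩ := (Submodule.mem_span_range_iff_exists_fun ℂ).1 this
    exact ⟨a, fun j => by simp [← ha]⟩
  have key : ∀ q : ℂ →ₗ[ℚ] ℚ, (fun j => ((q (γ j) : ℚ) : ℂ)) ∈
      Submodule.span ℂ (Set.range fun k j => (ρ k j : ℂ)) := by
    intro q
    obtain ⟨d, hd⟩ := IsLocalization.exist_integer_multiples_of_finite (nonZeroDivisors ℤ)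
      (fun j => q (γ j))
    choose p hp using hd
    have hd0 : ((d : ℤ) : ℚ) ≠ 0 := by
      exact_mod_cast nonZeroDivisors.coe_ne_zero d
    have hp' : ∀ j, (p j : ℚ) = (d : ℤ) * q (γ j) := fun j => by
      simpa using hp j
    have hpQ : p ∈ QLattice γ := by
      refine ⟨fun c hc => ?_, fun j k hjk => ?_⟩
      · have h1 : ∑ j, ((p j * c j : ℤ) : ℚ) = (d : ℤ) * q (∑ j, (c j : ℂ) * γ j) := by
          rw [map_sum, Finset.mul_sum]
          refine Finset.sum_congr rfl fun j _ => ?_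
          have : (c j : ℂ) * γ j = (c j : ℚ) • γ j := by simp [Rat.smul_def]
          rw [this, map_smul, Int.cast_mul, hp', smul_eq_mul]
          ring
        rw [hc.1, map_zero, mul_zero] at h1
        exact_mod_cast h1
      · have : (p j : ℚ) = p k := by rw [hp', hp', hjk]
        exact_mod_cast this
    obtain ⟨a, ha⟩ := hρ p hpQ
    have h2 : (fun j => ((q (γ j) : ℚ) : ℂ)) =
        ∑ k, ((d : ℤ) : ℂ)⁻¹ • (a k : ℂ) • fun j => (ρ k j : ℂ) := by
      ext j
      have hd0' : ((d : ℤ) : ℂ) ≠ 0 := by exact_mod_cast hd0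
      have h3 : (p j : ℂ) = ((d : ℤ) : ℂ) * (q (γ j) : ℂ) := by exact_mod_cast hp' j
      have h4 : (p j : ℂ) = ∑ k, (a k : ℂ) * ρ k j := by
        rw [← ha]
        simp
      rw [Finset.sum_apply]
      simp only [Pi.smul_apply, smul_eq_mul]
      rw [← Finset.mul_sum, ← h4, h3, inv_mul_cancel_left₀ hd0']
    rw [h2]
    exact Submodule.sum_mem _ fun k _ => Submodule.smul_mem _ _ (Submodule.smul_mem _ _
      (Submodule.subset_span ⟨k, rfl⟩))
  let b := Module.Basis.ofVectorSpace ℚ ℂ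
  classical
  let s := Finset.univ.biUnion fun j => (b.repr (γ j)).support
  have h5 : γ = ∑ l ∈ s, b l • fun j => ((b.coord l (γ j) : ℚ) : ℂ) := by
    ext j
    rw [Finset.sum_apply]
    conv_lhs => rw [← b.linearCombination_repr (γ j)]
    rw [Finsupp.linearCombination_apply, Finsupp.sum_of_support_subset _
      (Finset.subset_biUnion_of_mem (fun j => (b.repr (γ j)).support) (Finset.mem_univ j)) _
      (by simp)]
    refine Finset.sum_congr rfl fun l _ => ?_
    simp [Rat.smul_def, mul_comm]
  rw [h5]
  exact Submodule.sum_mem _ fun l _ => Submodule.smul_mem _ _ (key (b.coord l))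

theorem isSemisimple_diagCLM (γ : Fin n → ℂ) :
    Module.End.IsSemisimple (diagCLM γ : Module.End ℂ (Fin n → ℂ)) := by
  classical
  refine Module.End.isSemisimple_of_squarefree_aeval_eq_zero
    (p := ∏ a ∈ Finset.univ.image γ, (Polynomial.X - Polynomial.C a)) ?_ ?_
  · refine Polynomial.Separable.squarefree ?_
    exact Polynomial.separable_prod_X_sub_C_iff'.2 fun x _ y _ h => h
  · refine LinearMap.pi_ext' fun j => LinearMap.ext_ring ?_
    rw [← Finset.mul_prod_erase _ _ (Finset.mem_image_of_mem γ (Finset.mem_univ j)), mul_comm,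
      map_mul]
    have : Polynomial.aeval (diagCLM γ : Module.End ℂ (Fin n → ℂ))
        (Polynomial.X - Polynomial.C (γ j)) (Pi.single j 1) = 0 := by
      ext i
      by_cases h : i = j
      · subst h
        simp [Module.algebraMap_end_apply]
      · simp [Module.algebraMap_end_apply, h]
    simp only [LinearMap.comp_apply, LinearMap.single_apply, Module.End.mul_apply, this, map_zero,
      LinearMap.zero_apply]

end Resonance

section Normalization

variable {n : ℕ}

theorem det_mul_det_of_comp_eq_id {L M : (Fin n → ℂ) →L[ℂ] (Fin n → ℂ)}
    (h : L ∘L M = ContinuousLinearMap.id ℂ _) :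
    LinearMap.det (L : (Fin n → ℂ) →ₗ[ℂ] (Fin n → ℂ)) *
      LinearMap.det (M : (Fin n → ℂ) →ₗ[ℂ] (Fin n → ℂ)) = 1 := by
  rw [← LinearMap.det_comp, ← ContinuousLinearMap.toLinearMap_comp, h]
  exact LinearMap.det_id

/-- `φ` and `Θ` are mutually inverse germs of analytic maps at the origin. -/
structure IsLocalInversePair (φ Θ : (Fin n → ℂ) → (Fin n → ℂ)) : Prop where
  analytic_left : AnalyticAt ℂ φ 0
  analytic_right : AnalyticAt ℂ Θ 0
  left_zero : φ 0 = 0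
  right_zero : Θ 0 = 0
  left_inv : ∀ᶠ x in 𝓝 0, φ (Θ x) = x
  right_inv : ∀ᶠ y in 𝓝 0, Θ (φ y) = y

namespace IsLocalInversePair

variable {φ Θ : (Fin n → ℂ) → (Fin n → ℂ)}

theorem symm (h : IsLocalInversePair φ Θ) : IsLocalInversePair Θ φ :=
  ⟨h.analytic_right, h.analytic_left, h.right_zero, h.left_zero, h.right_inv, h.left_inv⟩

theorem tendsto_left (h : IsLocalInversePair φ Θ) : Tendsto φ (𝓝 0) (𝓝 0) := by
  simpa [h.left_zero] using h.analytic_left.continuousAt.tendsto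

theorem tendsto_right (h : IsLocalInversePair φ Θ) : Tendsto Θ (𝓝 0) (𝓝 0) :=
  h.symm.tendsto_left

theorem eventually_fderiv_comp (h : IsLocalInversePair φ Θ) : ∀ᶠ x in 𝓝 0,
    fderiv ℂ φ (Θ x) ∘L fderiv ℂ Θ x = ContinuousLinearMap.id ℂ _ := by
  filter_upwards [h.analytic_right.eventually_analyticAt,
    h.tendsto_right.eventually h.analytic_left.eventually_analyticAt, h.left_inv.eventually_nhds]
    with x h1 h2 h3
  exact fderiv_comp_fderiv_of_leftInverse h2.differentiableAt h1.differentiableAt h3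

theorem eventually_fderiv_comp' (h : IsLocalInversePair φ Θ) : ∀ᶠ y in 𝓝 0,
    fderiv ℂ φ y ∘L fderiv ℂ Θ (φ y) = ContinuousLinearMap.id ℂ _ := by
  filter_upwards [h.tendsto_left.eventually h.eventually_fderiv_comp, h.right_inv] with y h1 h2
  rwa [h2] at h1

theorem fderiv_left_zero (h : IsLocalInversePair φ Θ)
    (hd : fderiv ℂ Θ 0 = ContinuousLinearMap.id ℂ _) :
    fderiv ℂ φ 0 = ContinuousLinearMap.id ℂ _ := by
  simpa [h.right_zero, hd] using h.eventually_fderiv_comp.self_of_nhds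

theorem related_symm (h : IsLocalInversePair φ Θ) {X Y : (Fin n → ℂ) → (Fin n → ℂ)}
    (hXY : ∀ᶠ x in 𝓝 0, fderiv ℂ Θ x (X x) = Y (Θ x)) :
    ∀ᶠ y in 𝓝 0, fderiv ℂ φ y (Y y) = X (φ y) := by
  filter_upwards [h.tendsto_left.eventually hXY, h.right_inv, h.eventually_fderiv_comp']
    with y h1 h2 h3
  rw [h2] at h1
  rw [← h1]
  exact DFunLike.congr_fun h3 _

theorem related_pushforward (h : IsLocalInversePair φ Θ) (X : (Fin n → ℂ) → (Fin n → ℂ)) :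
    ∀ᶠ x in 𝓝 0, fderiv ℂ Θ x (X x) = (fun y => fderiv ℂ Θ (φ y) (X (φ y))) (Θ x) := by
  filter_upwards [h.left_inv] with x hx
  simp only [hx]

theorem analyticAt_pushforward {X : (Fin n → ℂ) → (Fin n → ℂ)}
    {y : Fin n → ℂ} (hφ : AnalyticAt ℂ φ y) (hΘ : AnalyticAt ℂ Θ (φ y))
    (hX : AnalyticAt ℂ X (φ y)) : AnalyticAt ℂ (fun y => fderiv ℂ Θ (φ y) (X (φ y))) y :=
  (AnalyticAt.fun_comp (g := fderiv ℂ Θ) hΘ.fderiv hφ).complex_clm_apply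
    (AnalyticAt.fun_comp (g := X) hX hφ)

theorem fderiv_pushforward_zero (h : IsLocalInversePair φ Θ)
    (hd : fderiv ℂ Θ 0 = ContinuousLinearMap.id ℂ _)
    {X : (Fin n → ℂ) → (Fin n → ℂ)} (hX : AnalyticAt ℂ X 0) (hX0 : X 0 = 0) :
    fderiv ℂ (fun y => fderiv ℂ Θ (φ y) (X (φ y))) 0 = fderiv ℂ X 0 := by
  have hφ := h.analytic_left
  have h1 : AnalyticAt ℂ (fun y => fderiv ℂ Θ (φ y)) 0 :=
    AnalyticAt.fun_comp (g := fderiv ℂ Θ) (by rw [h.left_zero]; exact h.analytic_right.fderiv) hφ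
  have h2 : DifferentiableAt ℂ X (φ 0) := by
    rw [h.left_zero]
    exact hX.differentiableAt
  have h3 : DifferentiableAt ℂ (fun y => X (φ y)) 0 := h2.comp 0 hφ.differentiableAt
  rw [fderiv_clm_apply h1.differentiableAt h3,
    fderiv_fun_comp _ h2 hφ.differentiableAt, h.left_zero, hd, h.fderiv_left_zero hd, hX0]
  ext x j
  simp

theorem eventually_lieBracket_eq_zero (h : IsLocalInversePair φ Θ)
    {X V Y Z : (Fin n → ℂ) → (Fin n → ℂ)} (hX : AnalyticAt ℂ X 0) (hV : AnalyticAt ℂ V 0)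
    (hY : AnalyticAt ℂ Y 0) (hZ : AnalyticAt ℂ Z 0)
    (hXY : ∀ᶠ x in 𝓝 0, fderiv ℂ Θ x (X x) = Y (Θ x))
    (hVZ : ∀ᶠ x in 𝓝 0, fderiv ℂ Θ x (V x) = Z (Θ x))
    (hXV : ∀ᶠ x in 𝓝 0, VectorField.lieBracket ℂ X V x = 0) :
    ∀ᶠ y in 𝓝 0, VectorField.lieBracket ℂ Y Z y = 0 := by
  have key : ∀ᶠ x in 𝓝 0, VectorField.lieBracket ℂ Y Z (Θ x) = 0 := by
    filter_upwards [h.analytic_right.eventually_analyticAt, hX.eventually_analyticAt,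
      hV.eventually_analyticAt, h.tendsto_right.eventually hY.eventually_analyticAt,
      h.tendsto_right.eventually hZ.eventually_analyticAt, hXY.eventually_nhds,
      hVZ.eventually_nhds, hXV] with x h1 h2 h3 h4 h5 h6 h7 h8
    rw [← fderiv_lieBracket_of_related h1 h2.differentiableAt h3.differentiableAt
      h4.differentiableAt h5.differentiableAt h6 h7, h8, map_zero]
  filter_upwards [h.tendsto_left.eventually key, h.right_inv] with y h1 h2
  rwa [h2] at h1

theorem of_fderiv_eq_id (hΘ : AnalyticAt ℂ Θ 0) (hΘ0 : Θ 0 = 0)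
    (hd : fderiv ℂ Θ 0 = ContinuousLinearMap.id ℂ _) : ∃ φ, IsLocalInversePair φ Θ := by
  obtain ⟨φ, h1, h2, h3, h4⟩ := hΘ.exists_analytic_leftInverse_rightInverse
    (i := ContinuousLinearEquiv.refl ℂ (Fin n → ℂ)) hd
  rw [hΘ0] at h1 h2 h3
  exact ⟨φ, h1, hΘ, h2, hΘ0, h4, h3⟩

end IsLocalInversePair

/-- Commuting isochore vector fields generating a torus action are simultaneously linearizable by a
volume-preserving map. -/
theorem exists_volume_preserving_linearization {r : ℕ}
    {V : Fin r → (Fin n → ℂ) → (Fin n → ℂ)} {ρ : Fin r → Fin n → ℤ}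
    (hV : ∀ k, AnalyticAt ℂ (V k) 0) (hV0 : ∀ k, V k 0 = 0)
    (hVd : ∀ k, fderiv ℂ (V k) 0 = diagCLM fun j => (ρ k j : ℂ))
    (htr : ∀ k, ∀ᶠ x in 𝓝 0, LinearMap.trace ℂ (Fin n → ℂ)
      (fderiv ℂ (V k) x : (Fin n → ℂ) →ₗ[ℂ] (Fin n → ℂ)) = 0)
    (hcomm : ∀ j k, ∀ᶠ x in 𝓝 0, VectorField.lieBracket ℂ (V j) (V k) x = 0)
    (hper : ∀ k, ∀ᶠ x in 𝓝 (0 : Fin n → ℂ), ∃ c : ℝ → Fin n → ℂ, c 0 = x ∧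
      c (2 * Real.pi) = x ∧ (∀ t, AnalyticAt ℂ (V k) (c t)) ∧
      ∀ t, HasDerivAt c (Complex.I • V k (c t)) t) :
    ∃ Θ : (Fin n → ℂ) → (Fin n → ℂ), AnalyticAt ℂ Θ 0 ∧ Θ 0 = 0 ∧
      fderiv ℂ Θ 0 = ContinuousLinearMap.id ℂ _ ∧
      (∀ᶠ x in 𝓝 0, LinearMap.det (fderiv ℂ Θ x : (Fin n → ℂ) →ₗ[ℂ] (Fin n → ℂ)) = 1) ∧
      ∀ k, ∀ᶠ x in 𝓝 0, fderiv ℂ Θ x (V k x) = diagCLM (fun j => (ρ k j : ℂ)) (Θ x) := by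
  obtain ⟨f, hf, hf0, hfd, hfV⟩ := exists_simultaneous_linearization hV hV0 hVd hcomm hper
  obtain ⟨g, hg⟩ := IsLocalInversePair.of_fderiv_eq_id hf hf0 hfd
  set J : (Fin n → ℂ) → ℂ := fun y =>
    LinearMap.det (fderiv ℂ g y : (Fin n → ℂ) →ₗ[ℂ] (Fin n → ℂ)) with hJ
  have hJan : AnalyticAt ℂ J 0 := analyticAt_linearMap_det hg.analytic_left.fderiv
  have hJ0 : J 0 = 1 := by
    simp only [hJ, hg.fderiv_left_zero hfd]
    exact LinearMap.det_id
  obtain ⟨h, hh, hh0, hhd, hhJ, hheq⟩ := exists_map_with_det_fderiv hJan hJ0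
  have hft := hg.tendsto_right
  have hJV : ∀ k, ∀ᶠ y in 𝓝 0, fderiv ℂ J y (diagCLM (fun j => (ρ k j : ℂ)) y) = 0 := by
    intro k
    filter_upwards [hg.analytic_left.eventually_analyticAt,
      hg.tendsto_left.eventually (hV k).eventually_analyticAt, hg.eventually_fderiv_comp',
      (hg.related_symm (Y := diagCLM _) (hfV k)).eventually_nhds,
      hg.tendsto_left.eventually (htr k)] with y h1 h2 h3 h4 h5
    have h6 := (htr k).self_of_nhds
    rw [hVd] at h6
    rw [hJ, fderiv_det_fderiv_of_related h1 (diagCLM _).differentiableAt h2.differentiableAt h3 h4,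
      h5, ContinuousLinearMap.fderiv, h6, sub_self, zero_mul]
  have hcompd : ∀ᶠ x in 𝓝 0, fderiv ℂ (fun x => h (f x)) x = fderiv ℂ h (f x) ∘L fderiv ℂ f x := by
    filter_upwards [hf.eventually_analyticAt, hft.eventually hh.eventually_analyticAt] with x h1 h2
    exact fderiv_fun_comp _ h2.differentiableAt h1.differentiableAt
  refine ⟨fun x => h (f x), AnalyticAt.fun_comp (g := h) (by rwa [hf0]) hf, by simp [hf0, hh0],
    ?_, ?_, fun k => ?_⟩
  · rw [hcompd.self_of_nhds, hf0, hhd, hfd, ContinuousLinearMap.id_comp]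
  · filter_upwards [hcompd, hft.eventually hhJ, hg.eventually_fderiv_comp] with x h1 h2 h3
    rw [h1, ContinuousLinearMap.toLinearMap_comp, LinearMap.det_comp, h2]
    exact det_mul_det_of_comp_eq_id h3
  · filter_upwards [hcompd, hfV k, hft.eventually (hheq _ (hJV k))] with x h1 h2 h3
    rw [h1, ContinuousLinearMap.comp_apply, h2, h3]

theorem admitsVolPDNormalization_of_torusAction {X : (Fin n → ℂ) → (Fin n → ℂ)}
    (hX : AnalyticAt ℂ X 0) (hX0 : X 0 = 0) {γ : Fin n → ℂ} {N : (Fin n → ℂ) →L[ℂ] (Fin n → ℂ)}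
    (hJC : fderiv ℂ X 0 = diagCLM γ + N) (hnil : IsNilpotent (N : Module.End ℂ (Fin n → ℂ)))
    (hSN : diagCLM γ ∘L N = N ∘L diagCLM γ) {r : ℕ} {ρ : Fin r → Fin n → ℤ}
    (hρ : ∀ σ ∈ QLattice γ, ∃ a : Fin r → ℤ, ∑ k, a k • ρ k = σ)
    {V : Fin r → (Fin n → ℂ) → (Fin n → ℂ)}
    (hV : ∀ k, AnalyticAt ℂ (V k) 0) (hV0 : ∀ k, V k 0 = 0)
    (hVd : ∀ k, fderiv ℂ (V k) 0 = diagCLM fun j => (ρ k j : ℂ))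
    (htr : ∀ k, ∀ᶠ x in 𝓝 0, LinearMap.trace ℂ (Fin n → ℂ)
      (fderiv ℂ (V k) x : (Fin n → ℂ) →ₗ[ℂ] (Fin n → ℂ)) = 0)
    (hcomm : ∀ j k, ∀ᶠ x in 𝓝 0, VectorField.lieBracket ℂ (V j) (V k) x = 0)
    (hXV : ∀ k, ∀ᶠ x in 𝓝 0, VectorField.lieBracket ℂ X (V k) x = 0)
    (hper : ∀ k, ∀ᶠ x in 𝓝 (0 : Fin n → ℂ), ∃ c : ℝ → Fin n → ℂ, c 0 = x ∧
      c (2 * Real.pi) = x ∧ (∀ t, AnalyticAt ℂ (V k) (c t)) ∧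
      ∀ t, HasDerivAt c (Complex.I • V k (c t)) t) :
    AdmitsVolPDNormalization X := by
  obtain ⟨Θ, hΘ, hΘ0, hΘd, hΘdet, hΘV⟩ :=
    exists_volume_preserving_linearization hV hV0 hVd htr hcomm hper
  obtain ⟨φ, hφ⟩ := IsLocalInversePair.of_fderiv_eq_id hΘ hΘ0 hΘd
  set Y : (Fin n → ℂ) → (Fin n → ℂ) := fun y => fderiv ℂ Θ (φ y) (X (φ y)) with hYdef
  have hY : AnalyticAt ℂ Y 0 := IsLocalInversePair.analyticAt_pushforward hφ.analytic_left
    (by rwa [hφ.left_zero]) (by rwa [hφ.left_zero])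
  have hYA : ∀ k, ∀ᶠ y in 𝓝 0,
      VectorField.lieBracket ℂ Y (diagCLM fun j => (ρ k j : ℂ)) y = 0 := fun k =>
    hφ.eventually_lieBracket_eq_zero hX (hV k) hY (ContinuousLinearMap.analyticAt _ 0)
      (hφ.related_pushforward X) (hΘV k) (hXV k)
  obtain ⟨a, ha⟩ := mem_span_of_basis_QLattice hρ
  have hS : ∀ y, diagCLM γ y = ∑ k, a k • diagCLM (fun j => (ρ k j : ℂ)) y := fun y => by
    ext j
    simp [ha j, Finset.sum_mul, mul_assoc]
  have hYS : ∀ᶠ y in 𝓝 0, VectorField.lieBracket ℂ Y (fun y => diagCLM γ y) y = 0 := by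
    filter_upwards [eventually_all.2 hYA] with y hy
    simp only [VectorField.lieBracket, ContinuousLinearMap.fderiv, sub_eq_zero] at hy ⊢
    rw [hS, hS, map_sum]
    exact Finset.sum_congr rfl fun k _ => by rw [hy, map_smul]
  have hdet : ∀ᶠ y in 𝓝 0,
      LinearMap.det (fderiv ℂ φ y : (Fin n → ℂ) →ₗ[ℂ] (Fin n → ℂ)) = 1 := by
    filter_upwards [hφ.eventually_fderiv_comp', hφ.tendsto_left.eventually hΘdet] with y h1 h2
    simpa [h2] using det_mul_det_of_comp_eq_id h1
  have hall := hY.eventually_analyticAt.and (hφ.analytic_left.eventually_analyticAt.and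
    (hYS.and (hdet.and (hφ.related_symm (X := X) (Y := Y) (hφ.related_pushforward X)))))
  obtain ⟨U, hU, hUo, h0U⟩ := eventually_nhds_iff.1 hall
  refine ⟨U, Y, φ, hUo, h0U, fun y hy => (hU y hy).1, fun y hy => (hU y hy).2.1, ?_, hφ.left_zero,
    ?_, ⟨diagCLM γ, N, ?_, isSemisimple_diagCLM γ, hnil, hSN, fun y hy => (hU y hy).2.2.1⟩,
    fun y hy => (hU y hy).2.2.2.1, fun y hy => (hU y hy).2.2.2.2⟩
  · simp [hYdef, hφ.left_zero, hX0]
  · rw [hφ.fderiv_left_zero hΘd]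
    exact Function.bijective_id
  · rw [hφ.fderiv_pushforward_zero hΘd hX hX0, hJC]

end Normalization

section TorusAction

variable {n : ℕ}

/-- The Jordan–Chevalley decomposition is compatible with conjugation and unique. -/
theorem conj_semisimple_part_unique (i : (Fin n → ℂ) ≃L[ℂ] (Fin n → ℂ))
    {S N S' N' : (Fin n → ℂ) →L[ℂ] (Fin n → ℂ)}
    (hS : Module.End.IsSemisimple (S : Module.End ℂ (Fin n → ℂ)))
    (hN : IsNilpotent (N : Module.End ℂ (Fin n → ℂ))) (hSN : S ∘L N = N ∘L S)
    (hS' : Module.End.IsSemisimple (S' : Module.End ℂ (Fin n → ℂ)))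
    (hN' : IsNilpotent (N' : Module.End ℂ (Fin n → ℂ))) (hSN' : S' ∘L N' = N' ∘L S')
    (h : (i : (Fin n → ℂ) →L[ℂ] (Fin n → ℂ)) ∘L (S + N) = (S' + N') ∘L i) :
    (i : (Fin n → ℂ) →L[ℂ] (Fin n → ℂ)) ∘L S = S' ∘L i := by
  have hlin : ∀ {A B : (Fin n → ℂ) →L[ℂ] (Fin n → ℂ)}, A ∘L B = B ∘L A →
      Commute (B : Module.End ℂ (Fin n → ℂ)) (A : Module.End ℂ (Fin n → ℂ)) := fun hAB =>
    LinearMap.ext fun x => (DFunLike.congr_fun hAB x).symm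
  let e := i.toLinearEquiv.conjRingEquiv
  have hSe : Module.End.IsSemisimple (e (S : Module.End ℂ (Fin n → ℂ))) :=
    (i.toLinearEquiv.isSemisimple_iff (S : Module.End ℂ (Fin n → ℂ)) _
      (LinearMap.ext fun x => by simp [e])).1 hS
  have hsum : e (N : Module.End ℂ (Fin n → ℂ)) + e (S : Module.End ℂ (Fin n → ℂ)) =
      (N' : Module.End ℂ (Fin n → ℂ)) + (S' : Module.End ℂ (Fin n → ℂ)) := by
    refine LinearMap.ext fun x => ?_
    have := DFunLike.congr_fun h (i.symm x)
    simpa [e, add_comm] using this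
  have h2 := (Module.End.isNilpotent_isSemisimple_unique (hN.map e) hSe hN' hS' ((hlin hSN).map e)
    (hlin hSN') hsum).2
  ext1 x
  have := LinearMap.congr_fun h2 (i x)
  simpa [e] using this

/-- A volume-preserving normalization can be chosen tangent to the identity, with the given diagonal
semisimple part. -/
theorem AdmitsVolPDNormalization.exists_tangent_to_id {X : (Fin n → ℂ) → (Fin n → ℂ)}
    (hX : AnalyticAt ℂ X 0) {γ : Fin n → ℂ} {N : (Fin n → ℂ) →L[ℂ] (Fin n → ℂ)}
    (hJC : fderiv ℂ X 0 = diagCLM γ + N) (hnil : IsNilpotent (N : Module.End ℂ (Fin n → ℂ)))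
    (hSN : diagCLM γ ∘L N = N ∘L diagCLM γ) (h : AdmitsVolPDNormalization X) :
    ∃ Y Θ : (Fin n → ℂ) → (Fin n → ℂ), AnalyticAt ℂ Y 0 ∧ AnalyticAt ℂ Θ 0 ∧ Θ 0 = 0 ∧
      fderiv ℂ Θ 0 = ContinuousLinearMap.id ℂ _ ∧
      (∀ᶠ x in 𝓝 0, LinearMap.det (fderiv ℂ Θ x : (Fin n → ℂ) →ₗ[ℂ] (Fin n → ℂ)) = 1) ∧
      (∀ᶠ x in 𝓝 0, fderiv ℂ Θ x (Y x) = X (Θ x)) ∧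
      ∀ᶠ x in 𝓝 0, VectorField.lieBracket ℂ Y (diagCLM γ) x = 0 := by
  obtain ⟨W, Y, φ, hWo, h0W, hY, hφ, hY0, hφ0, hbij, ⟨S, M, hdY, hS, hM, hSM, hbr⟩, hdet, hrel⟩ := h
  have hW : ∀ᶠ x in 𝓝 0, x ∈ W := hWo.mem_nhds h0W
  obtain ⟨i, hi⟩ : ∃ i : (Fin n → ℂ) ≃L[ℂ] (Fin n → ℂ),
      (i : (Fin n → ℂ) →L[ℂ] (Fin n → ℂ)) = fderiv ℂ φ 0 :=
    ⟨(LinearEquiv.ofBijective (fderiv ℂ φ 0 : (Fin n → ℂ) →ₗ[ℂ] (Fin n → ℂ))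
      hbij).toContinuousLinearEquiv, by ext1 x; rfl⟩
  have hdX : (i : (Fin n → ℂ) →L[ℂ] (Fin n → ℂ)) ∘L (S + M) = (diagCLM γ + N) ∘L i := by
    have h1 : fderiv ℂ (fun x => fderiv ℂ φ x (Y x)) 0 = fderiv ℂ (fun x => X (φ x)) 0 :=
      EventuallyEq.fderiv_eq (𝕜 := ℂ) (hW.mono hrel)
    rw [fderiv_clm_apply (hφ 0 h0W).fderiv.differentiableAt (hY 0 h0W).differentiableAt,
      fderiv_fun_comp _ (by rw [hφ0]; exact hX.differentiableAt) (hφ 0 h0W).differentiableAt,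
      hφ0, hJC, ← hi, hdY, hY0] at h1
    rw [← h1]
    ext1 x
    simp
  have hconj := conj_semisimple_part_unique i hS hM hSM (isSemisimple_diagCLM γ) hnil hSN hdX
  have hst : Tendsto i.symm (𝓝 0) (𝓝 0) := by
    simpa using i.symm.continuous.tendsto 0
  have hdφ : ∀ᶠ x in 𝓝 0, fderiv ℂ (fun x => φ (i.symm x)) x =
      fderiv ℂ φ (i.symm x) ∘L (i.symm : (Fin n → ℂ) →L[ℂ] (Fin n → ℂ)) := by
    filter_upwards [hst.eventually hW] with x hx
    rw [fderiv_fun_comp _ (hφ _ hx).differentiableAt i.symm.differentiableAt,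
      i.symm.fderiv]
  refine ⟨fun x => i (Y (i.symm x)), fun x => φ (i.symm x), ?_, ?_, by simp [hφ0], ?_, ?_, ?_, ?_⟩
  · exact (i.analyticAt _).fun_comp
      (AnalyticAt.fun_comp (g := Y) (by simpa using hY 0 h0W) (i.symm.analyticAt 0))
  · exact AnalyticAt.fun_comp (g := φ) (by simpa using hφ 0 h0W) (i.symm.analyticAt 0)
  · rw [hdφ.self_of_nhds, map_zero, ← hi]
    ext1 x
    simp
  · have h1 : LinearMap.det ((i : (Fin n → ℂ) →L[ℂ] (Fin n → ℂ)) : (Fin n → ℂ) →ₗ[ℂ] _) = 1 := by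
      rw [hi, hdet 0 h0W]
    have h2 : LinearMap.det
        ((i.symm : (Fin n → ℂ) →L[ℂ] (Fin n → ℂ)) : (Fin n → ℂ) →ₗ[ℂ] _) = 1 := by
      have := det_mul_det_of_comp_eq_id (n := n) i.coe_comp_coe_symm
      rwa [h1, one_mul] at this
    filter_upwards [hdφ, hst.eventually hW] with x hx hxW
    rw [hx, ContinuousLinearMap.toLinearMap_comp, LinearMap.det_comp, hdet _ hxW, h2, one_mul]
  · filter_upwards [hdφ, hst.eventually hW] with x hx hxW
    rw [hx, ← hrel _ hxW]
    simp
  · filter_upwards [hst.eventually hW] with x hx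
    have h1 := fderiv_lieBracket_of_related (f := i) (x := i.symm x) (Y := Y) (Z := fun y => S y)
      (X := fun x => i (Y (i.symm x))) (V := diagCLM γ) (i.analyticAt _)
      (hY _ hx).differentiableAt S.differentiableAt ?_ (diagCLM γ).differentiableAt
      (Eventually.of_forall fun y => by simp [i.fderiv])
      (Eventually.of_forall fun y => by
        simpa [i.fderiv] using DFunLike.congr_fun hconj y)
    · rw [hbr _ hx, map_zero, i.apply_symm_apply] at h1
      exact h1.symm
    · rw [i.apply_symm_apply]
      exact i.differentiableAt.comp x
        ((hY _ hx).differentiableAt.comp x i.symm.differentiableAt)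

end TorusAction

section TorusAction

variable {n : ℕ}

/-- A volume-preserving change of coordinates preserves the divergence. -/
theorem IsLocalInversePair.eventually_trace_fderiv_eq {φ Θ A V : (Fin n → ℂ) → (Fin n → ℂ)}
    (h : IsLocalInversePair φ Θ) (hA : AnalyticAt ℂ A 0) (hV : AnalyticAt ℂ V 0)
    (hdet : ∀ᶠ x in 𝓝 0, LinearMap.det (fderiv ℂ Θ x : (Fin n → ℂ) →ₗ[ℂ] (Fin n → ℂ)) = 1)
    (hAV : ∀ᶠ x in 𝓝 0, fderiv ℂ Θ x (A x) = V (Θ x)) :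
    ∀ᶠ y in 𝓝 0, LinearMap.trace ℂ (Fin n → ℂ)
      (fderiv ℂ V y : (Fin n → ℂ) →ₗ[ℂ] (Fin n → ℂ)) =
        LinearMap.trace ℂ (Fin n → ℂ) (fderiv ℂ A (φ y) : (Fin n → ℂ) →ₗ[ℂ] (Fin n → ℂ)) := by
  have key : ∀ᶠ x in 𝓝 0, LinearMap.trace ℂ (Fin n → ℂ)
      (fderiv ℂ V (Θ x) : (Fin n → ℂ) →ₗ[ℂ] (Fin n → ℂ)) =
        LinearMap.trace ℂ (Fin n → ℂ) (fderiv ℂ A x : (Fin n → ℂ) →ₗ[ℂ] (Fin n → ℂ)) := by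
    filter_upwards [h.analytic_right.eventually_analyticAt, hA.eventually_analyticAt,
      h.tendsto_right.eventually hV.eventually_analyticAt, h.symm.eventually_fderiv_comp',
      hAV.eventually_nhds, hdet.eventually_nhds] with x h1 h2 h3 h4 h5 h6
    have h7 := fderiv_det_fderiv_of_related h1 h2.differentiableAt h3.differentiableAt h4 h5
    rw [EventuallyEq.fderiv_eq (𝕜 := ℂ) (f := fun _ => (1 : ℂ)) h6, h6.self_of_nhds] at h7
    exact sub_eq_zero.1 (by simpa using h7.symm)
  filter_upwards [h.tendsto_left.eventually key, h.right_inv] with y h1 h2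
  rwa [h2] at h1

/-- The torus action obtained by transporting the linear torus action through `Θ`. -/
theorem exists_torusAction_of_linearization {X Y Θ : (Fin n → ℂ) → (Fin n → ℂ)}
    (hX : AnalyticAt ℂ X 0) (hY : AnalyticAt ℂ Y 0) (hΘ : AnalyticAt ℂ Θ 0) (hΘ0 : Θ 0 = 0)
    (hΘd : fderiv ℂ Θ 0 = ContinuousLinearMap.id ℂ _)
    (hdet : ∀ᶠ x in 𝓝 0, LinearMap.det (fderiv ℂ Θ x : (Fin n → ℂ) →ₗ[ℂ] (Fin n → ℂ)) = 1)
    (hYX : ∀ᶠ x in 𝓝 0, fderiv ℂ Θ x (Y x) = X (Θ x)) {r : ℕ} {ρ : Fin r → Fin n → ℤ}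
    (hρ : ∀ k, ∑ j, ρ k j = 0)
    (hbr : ∀ k, ∀ᶠ x in 𝓝 0, VectorField.lieBracket ℂ Y (diagCLM fun j => (ρ k j : ℂ)) x = 0) :
    ∃ U : Set (Fin n → ℂ), IsOpen U ∧ (0 : Fin n → ℂ) ∈ U ∧
      ∃ V : Fin r → (Fin n → ℂ) → (Fin n → ℂ),
        (∀ k, AnalyticOnNhd ℂ (V k) U) ∧
        (∀ k, ∀ x ∈ U,
          LinearMap.trace ℂ (Fin n → ℂ)
            (fderiv ℂ (V k) x : (Fin n → ℂ) →ₗ[ℂ] (Fin n → ℂ)) = 0) ∧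
        (∀ k, V k 0 = 0 ∧
          fderiv ℂ (V k) 0 = diagCLM (fun j => (ρ k j : ℂ))) ∧
        (∀ j k, ∀ x ∈ U, VectorField.lieBracket ℂ (V j) (V k) x = 0) ∧
        (∀ k, ∀ x ∈ U, VectorField.lieBracket ℂ X (V k) x = 0) ∧
        (∀ k, ∀ x ∈ U, ∃ c : ℝ → (Fin n → ℂ),
          (∀ t, c t ∈ U) ∧ c 0 = x ∧
          (∀ t : ℝ, HasDerivAt c (Complex.I • V k (c t)) t) ∧
          (∀ t : ℝ, c (t + 2 * Real.pi) = c t)) := by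
  obtain ⟨φ, hφ⟩ := IsLocalInversePair.of_fderiv_eq_id hΘ hΘ0 hΘd
  set A : Fin r → (Fin n → ℂ) →L[ℂ] (Fin n → ℂ) := fun k => diagCLM fun j => (ρ k j : ℂ) with hAdef
  set V : Fin r → (Fin n → ℂ) → (Fin n → ℂ) := fun k y => fderiv ℂ Θ (φ y) (A k (φ y)) with hVdef
  have hA : ∀ k x, AnalyticAt ℂ (A k) x := fun k x => (A k).analyticAt x
  have hV : ∀ k y, AnalyticAt ℂ φ y → AnalyticAt ℂ Θ (φ y) → AnalyticAt ℂ (V k) y :=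
    fun k y h1 h2 => IsLocalInversePair.analyticAt_pushforward h1 h2 (hA k _)
  have hVan : ∀ k, AnalyticAt ℂ (V k) 0 := fun k =>
    hV k 0 hφ.analytic_left (by rwa [hφ.left_zero])
  have hAV : ∀ k, ∀ᶠ x in 𝓝 0, fderiv ℂ Θ x (A k x) = V k (Θ x) := fun k =>
    hφ.related_pushforward (A k)
  have htrace : ∀ k, ∀ᶠ y in 𝓝 0, LinearMap.trace ℂ (Fin n → ℂ)
      (fderiv ℂ (V k) y : (Fin n → ℂ) →ₗ[ℂ] (Fin n → ℂ)) = 0 := fun k => by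
    filter_upwards [hφ.eventually_trace_fderiv_eq (hA k 0) (hVan k) hdet (hAV k)] with y hy
    rw [hy, (A k).fderiv, hAdef, trace_diagCLM]
    exact_mod_cast hρ k
  have hVV : ∀ j k, ∀ᶠ y in 𝓝 0, VectorField.lieBracket ℂ (V j) (V k) y = 0 := fun j k =>
    hφ.eventually_lieBracket_eq_zero (hA j 0) (hA k 0) (hVan j) (hVan k) (hAV j) (hAV k)
      (Eventually.of_forall fun x => by
        simp only [VectorField.lieBracket, ContinuousLinearMap.fderiv, sub_eq_zero]
        exact DFunLike.congr_fun (diagCLM_comm _ _) x)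
  have hXV : ∀ k, ∀ᶠ y in 𝓝 0, VectorField.lieBracket ℂ X (V k) y = 0 := fun k =>
    hφ.eventually_lieBracket_eq_zero hY (hA k 0) hX (hVan k) hYX (hAV k) (hbr k)
  obtain ⟨O, hO, hOo, h0O⟩ := eventually_nhds_iff.1 (hφ.analytic_left.eventually_analyticAt.and
    ((hφ.tendsto_left.eventually hΘ.eventually_analyticAt).and (hφ.right_inv.and
      ((eventually_all.2 htrace).and ((eventually_all.2 fun j => eventually_all.2 (hVV j)).and
        (eventually_all.2 hXV))))))
  obtain ⟨ε, hε, hball⟩ := Metric.eventually_nhds_iff_ball.1 ((hφ.tendsto_right.eventually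
    (hOo.mem_nhds h0O)).and (hφ.left_inv.and hΘ.eventually_analyticAt))
  have hφc : ContinuousOn φ O := fun y hy => (hO y hy).1.continuousAt.continuousWithinAt
  refine ⟨O ∩ φ ⁻¹' Metric.ball 0 ε, hφc.isOpen_inter_preimage hOo Metric.isOpen_ball,
    ⟨h0O, by simpa [hφ.left_zero] using hε⟩, V, fun k y hy => hV k y (hO y hy.1).1 (hO y hy.1).2.1,
    fun k y hy => (hO y hy.1).2.2.2.1 k, fun k => ⟨by simp [hVdef, hφ.left_zero], ?_⟩,
    fun j k y hy => (hO y hy.1).2.2.2.2.1 j k, fun k y hy => (hO y hy.1).2.2.2.2.2 k,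
    fun k y hy => ?_⟩
  · rw [hφ.fderiv_pushforward_zero hΘd (hA k 0) (map_zero _), (A k).fderiv]
  · have hmem : ∀ t, torusRotation (ρ k) t (φ y) ∈ Metric.ball (0 : Fin n → ℂ) ε := fun t => by
      rw [mem_ball_zero_iff, norm_torusRotation_apply]
      exact mem_ball_zero_iff.1 hy.2
    refine ⟨fun t => Θ (torusRotation (ρ k) t (φ y)), fun t => ⟨(hball _ (hmem t)).1, ?_⟩, ?_,
      fun t => ?_, fun t => ?_⟩
    · rw [Set.mem_preimage, (hball _ (hmem t)).2.1]
      exact hmem t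
    · simp only [torusRotation_zero]
      exact (hO y hy.1).2.2.1
    · have h1 : HasDerivAt (fun t => torusRotation (ρ k) t (φ y))
          (Complex.I • A k (torusRotation (ρ k) t (φ y))) t := by
        have := (((isRotationFlow_torusRotation (ρ k)).hasDerivAt t).hasDerivWithinAt
          (s := Set.univ)).complex_clm_apply (hasDerivWithinAt_const t Set.univ (φ y))
        simpa using this.hasDerivAt univ_mem
      have h2 := ((hball _ (hmem t)).2.2.differentiableAt.hasFDerivAt.restrictScalars
        ℝ).comp_hasDerivAt t h1
      refine h2.congr_deriv ?_
      simp only [hVdef, (hball _ (hmem t)).2.1]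
      exact map_smul (fderiv ℂ Θ _) _ _
    · simp only [← torusRotation_add, torusRotation_two_pi, ContinuousLinearMap.comp_id]

theorem AdmitsVolPDNormalization.exists_torusAction {X : (Fin n → ℂ) → (Fin n → ℂ)}
    (hX : AnalyticAt ℂ X 0) (hiso : LinearMap.trace ℂ (Fin n → ℂ)
      (fderiv ℂ X 0 : (Fin n → ℂ) →ₗ[ℂ] (Fin n → ℂ)) = 0)
    {γ : Fin n → ℂ} {N : (Fin n → ℂ) →L[ℂ] (Fin n → ℂ)}
    (hJC : fderiv ℂ X 0 = diagCLM γ + N) (hnil : IsNilpotent (N : Module.End ℂ (Fin n → ℂ)))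
    (hSN : diagCLM γ ∘L N = N ∘L diagCLM γ) {r : ℕ} {ρ : Fin r → Fin n → ℤ}
    (hρ : ∀ k, ρ k ∈ QLattice γ) (h : AdmitsVolPDNormalization X) :
    ∃ U : Set (Fin n → ℂ), IsOpen U ∧ (0 : Fin n → ℂ) ∈ U ∧
      ∃ V : Fin r → (Fin n → ℂ) → (Fin n → ℂ),
        (∀ k, AnalyticOnNhd ℂ (V k) U) ∧
        (∀ k, ∀ x ∈ U,
          LinearMap.trace ℂ (Fin n → ℂ)
            (fderiv ℂ (V k) x : (Fin n → ℂ) →ₗ[ℂ] (Fin n → ℂ)) = 0) ∧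
        (∀ k, V k 0 = 0 ∧
          fderiv ℂ (V k) 0 = diagCLM (fun j => (ρ k j : ℂ))) ∧
        (∀ j k, ∀ x ∈ U, VectorField.lieBracket ℂ (V j) (V k) x = 0) ∧
        (∀ k, ∀ x ∈ U, VectorField.lieBracket ℂ X (V k) x = 0) ∧
        (∀ k, ∀ x ∈ U, ∃ c : ℝ → (Fin n → ℂ),
          (∀ t, c t ∈ U) ∧ c 0 = x ∧
          (∀ t : ℝ, HasDerivAt c (Complex.I • V k (c t)) t) ∧
          (∀ t : ℝ, c (t + 2 * Real.pi) = c t)) := by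
  obtain ⟨Y, Θ, hY, hΘ, hΘ0, hΘd, hdet, hYX, hbr⟩ := h.exists_tangent_to_id hX hJC hnil hSN
  have hγ : ∑ j, γ j = 0 := by
    rw [← trace_diagCLM, ← hiso, hJC, ContinuousLinearMap.toLinearMap_add, map_add,
      (LinearMap.isNilpotent_trace_of_isNilpotent hnil).eq_zero, add_zero]
  exact exists_torusAction_of_linearization hX hY hΘ hΘ0 hΘd hdet hYX
    (fun k => sum_eq_zero_of_mem_QLattice hγ (hρ k))
    fun k => eventually_lieBracket_diagCLM_eq_zero (hρ k) hY hbr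

end TorusAction

end Helpers

/-- **Toric characterization of isochore Poincaré–Dulac normalization**
(Zung). An isochore holomorphic vector field `X` near `0 ∈ ℂⁿ` with
`X 0 = 0` and semisimple linear part `diag γ` admits a volume-preserving
convergent Poincaré–Dulac normalization iff it is preserved by an effective
holomorphic isochore torus action of dimension `r` (the toric degree) with
the appropriate weights, presented by isochore holomorphic generators
`V₁, …, V_r` with `DV_k(0) = diag ρᵏ` for a `ℤ`-basis `ρ¹, …, ρʳ` of `Q(γ)`,
each `i·V_k` being periodic of period `2π`. -/
theorem isochore_admitsVolPDNormalization_iff_torusAction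
    (n : ℕ) (X : (Fin n → ℂ) → (Fin n → ℂ))
    (W : Set (Fin n → ℂ)) (hWopen : IsOpen W) (h0W : (0 : Fin n → ℂ) ∈ W)
    (hXan : AnalyticOnNhd ℂ X W) (hX0 : X 0 = 0)
    (hiso : ∀ x ∈ W,
      LinearMap.trace ℂ (Fin n → ℂ)
        (fderiv ℂ X x : (Fin n → ℂ) →ₗ[ℂ] (Fin n → ℂ)) = 0)
    (γ : Fin n → ℂ) (N : (Fin n → ℂ) →L[ℂ] (Fin n → ℂ))
    (hJC : fderiv ℂ X 0 = diagCLM γ + N)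
    (hnil : IsNilpotent (N : Module.End ℂ (Fin n → ℂ)))
    (hSN : diagCLM γ ∘L N = N ∘L diagCLM γ)
    (r : ℕ) (ρ : Fin r → Fin n → ℤ)
    (hρmem : ∀ k, ρ k ∈ QLattice γ)
    (hρbasis : ∀ σ ∈ QLattice γ, ∃! a : Fin r → ℤ, ∑ k, a k • ρ k = σ) :
    AdmitsVolPDNormalization X ↔
      ∃ U : Set (Fin n → ℂ), IsOpen U ∧ (0 : Fin n → ℂ) ∈ U ∧
        ∃ V : Fin r → (Fin n → ℂ) → (Fin n → ℂ),
          (∀ k, AnalyticOnNhd ℂ (V k) U) ∧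
          (∀ k, ∀ x ∈ U,
            LinearMap.trace ℂ (Fin n → ℂ)
              (fderiv ℂ (V k) x : (Fin n → ℂ) →ₗ[ℂ] (Fin n → ℂ)) = 0) ∧
          (∀ k, V k 0 = 0 ∧
            fderiv ℂ (V k) 0 = diagCLM (fun j => (ρ k j : ℂ))) ∧
          (∀ j k, ∀ x ∈ U, VectorField.lieBracket ℂ (V j) (V k) x = 0) ∧
          (∀ k, ∀ x ∈ U, VectorField.lieBracket ℂ X (V k) x = 0) ∧
          (∀ k, ∀ x ∈ U, ∃ c : ℝ → (Fin n → ℂ),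
            (∀ t, c t ∈ U) ∧ c 0 = x ∧
            (∀ t : ℝ, HasDerivAt c (Complex.I • V k (c t)) t) ∧
            (∀ t : ℝ, c (t + 2 * Real.pi) = c t)) := by
  refine ⟨fun h => h.exists_torusAction (hXan 0 h0W) (hiso 0 h0W) hJC hnil hSN hρmem, ?_⟩
  rintro ⟨U, hUo, h0U, V, hV, htr, hV0, hVV, hXV, hcurve⟩
  have hU : ∀ᶠ x in nhds (0 : Fin n → ℂ), x ∈ U := hUo.mem_nhds h0U
  refine admitsVolPDNormalization_of_torusAction (hXan 0 h0W) hX0 hJC hnil hSN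
    (fun σ hσ => (hρbasis σ hσ).exists) (fun k => hV k 0 h0U) (fun k => (hV0 k).1)
    (fun k => (hV0 k).2) (fun k => hU.mono (htr k)) (fun j k => hU.mono (hVV j k))
    (fun k => hU.mono (hXV k)) fun k => hU.mono fun x hx => ?_
  obtain ⟨c, hcU, hc0, hc, hper⟩ := hcurve k x hx
  refine ⟨c, hc0, ?_, fun t => hV k _ (hcU t), hc⟩
  rw [← hc0, ← hper 0, zero_add]
end

section
/- Let U ⊆ ℂⁿ be an open ball centered at 0 (or more generally a star-shaped open neighborhood of 0), and let X₁, …, X_{n−1} : U → ℂⁿ be analytic vector fields which commute pairwise ([X_i, X_j] = 0 on U) and are isochore (trace(DX_i(x)) = 0 for all x ∈ U and all i). Define the analytic 1-form α on U by α(x)(v) = det(X₁(x), …, X_{n−1}(x), v), the determinant of the n×n matrix whose first n−1 columns are X₁(x), …, X_{n−1}(x) and whose last column is v. Then α is exact: there exists an analytic function g : U → ℂ such that Dg(x)(v) = α(x)(v) for all x ∈ U and all v ∈ ℂⁿ; in particular g is a common first integral of the X_i, i.e. Dg(x)(X_i(x)) = 0 for all x ∈ U and all i. -/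
open Function Set Metric Filter Topology
open scoped Matrix

/-- The trace identity for determinants: applying an endomorphism to one row at a time and summing
multiplies the determinant by the trace. -/
theorem Matrix.sum_detRowAlternating_update {ι R : Type*} [Fintype ι] [DecidableEq ι] [CommRing R]
    (w : ι → ι → R) (A : (ι → R) →ₗ[R] (ι → R)) :
    ∑ i, Matrix.detRowAlternating (update w i (A (w i))) =
      LinearMap.trace R (ι → R) A * Matrix.detRowAlternating w := by
  set M : Matrix ι ι R := Matrix.of w
  have h (i : ι) : Matrix.detRowAlternating (update w i (A (w i))) =
      (Mᵀ.adjugate * (LinearMap.toMatrix' A * Mᵀ)) i i := by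
    change (M.updateRow i (A (w i))).det = _
    rw [← Matrix.cramer_transpose_apply, Matrix.cramer_eq_adjugate_mulVec, Matrix.mul_apply,
      Matrix.mulVec, dotProduct]
    refine Finset.sum_congr rfl fun k _ ↦ ?_
    rw [← LinearMap.toMatrix'_mulVec A (w i)]
    rfl
  simp_rw [h]
  change Matrix.trace _ = _ * M.det
  rw [Matrix.trace_mul_comm, Matrix.mul_assoc, Matrix.mul_adjugate, Matrix.det_transpose,
    Matrix.mul_smul, Matrix.mul_one, Matrix.trace_smul, smul_eq_mul, mul_comm,
    LinearMap.trace_eq_matrix_trace R (Pi.basisFun R ι), LinearMap.toMatrix_eq_toMatrix']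

/-- Closedness, at a point, of the volume form contracted with commuting trace-free fields:
`a i` are the values of the fields and `A i` their derivatives. -/
theorem sum_det_update_symm {ι R : Type*} [Fintype ι] [DecidableEq ι] [CommRing R]
    (l : ι) (a : ι → ι → R) (A : ι → (ι → R) →ₗ[R] (ι → R))
    (hcomm : ∀ i j, A j (a i) = A i (a j)) (htr : ∀ i, LinearMap.trace R (ι → R) (A i) = 0)
    (u v : ι → R) :
    ∑ i ∈ Finset.univ.erase l, Matrix.detRowAlternating (update (update a l v) i (A i u)) =
      ∑ i ∈ Finset.univ.erase l, Matrix.detRowAlternating (update (update a l u) i (A i v)) := by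
  set D : (ι → R) [⋀^ι]→ₗ[R] R := Matrix.detRowAlternating
  have key (j : ι) (hj : j ∈ Finset.univ.erase l) :
      D (update (update a l v) j (A j u)) - D (update (update a l u) j (A j v)) +
        ∑ i ∈ (Finset.univ.erase l).erase j,
          D (update (update (update a l v) j u) i (A j (a i))) = 0 := by
    have hjl : j ≠ l := Finset.ne_of_mem_erase hj
    have h := Matrix.sum_detRowAlternating_update (update (update a l v) j u) (A j)
    rw [htr, zero_mul, ← Finset.add_sum_erase _ _ (Finset.mem_univ l),
      ← Finset.add_sum_erase _ _ hj] at h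
    have h1 : D (update (update (update a l v) j u) l (A j (update (update a l v) j u l))) =
        -D (update (update a l u) j (A j v)) := by
      rw [← D.map_swap _ hjl]
      congr 1
      ext i : 1
      by_cases hi : i = l
      · subst hi; simp [hjl.symm]
      · by_cases hi' : i = j
        · subst hi'; simp [hi, hjl.symm]
        · simp [hi, hi', Equiv.swap_apply_of_ne_of_ne]
    have h2 : D (update (update (update a l v) j u) j (A j (update (update a l v) j u j))) =
        D (update (update a l v) j (A j u)) := by
      simp
    rw [h1, h2] at h
    rw [← h, sub_eq_neg_add, add_assoc]
    congr 2
    refine Finset.sum_congr rfl fun i hi ↦ ?_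
    simp only [Finset.mem_erase] at hi
    simp [D, hi.1, hi.2.1]
  have hzero : ∑ j ∈ Finset.univ.erase l, ∑ i ∈ (Finset.univ.erase l).erase j,
      D (update (update (update a l v) j u) i (A j (a i))) = 0 := by
    rw [Finset.sum_sigma']
    refine Finset.sum_involution (fun p _ ↦ ⟨p.2, p.1⟩) ?_ ?_ ?_ ?_
    · rintro ⟨j, i⟩ hp
      simp only [Finset.mem_sigma, Finset.mem_erase, Finset.mem_univ, and_true] at hp
      obtain ⟨hjl, hij, hil⟩ := hp
      dsimp only
      rw [hcomm i j, add_eq_zero_iff_eq_neg, ← D.map_swap _ hij]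
      congr 1
      ext k : 1
      by_cases hk : k = i
      · subst hk; simp
      · by_cases hk' : k = j
        · subst hk'; simp [hk, hij]
        · simp [hk, hk', Equiv.swap_apply_of_ne_of_ne]
    · rintro ⟨j, i⟩ hp _ h
      simp only [Finset.mem_sigma, Finset.mem_erase] at hp
      simp only [Sigma.mk.injEq, heq_eq_eq] at h
      exact hp.2.1 h.1
    · rintro ⟨j, i⟩ hp
      simp only [Finset.mem_sigma, Finset.mem_erase, Finset.mem_univ, and_true] at hp ⊢
      exact ⟨hp.2.2, hp.2.1.symm, hp.1⟩
    · simp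
  have := Finset.sum_eq_zero key
  rw [Finset.sum_add_distrib, hzero, add_zero, Finset.sum_sub_distrib, sub_eq_zero] at this
  exact this

/-- A primitive of an analytic 1-form is analytic. -/
theorem AnalyticAt.of_eventually_hasFDerivAt {E F : Type*} [NormedAddCommGroup E] [NormedSpace ℂ E]
    [NormedAddCommGroup F] [NormedSpace ℂ F] [CompleteSpace F] {g : E → F} {ω : E → E →L[ℂ] F}
    {b : E} (hω : AnalyticAt ℂ ω b) (hg : ∀ᶠ x in 𝓝 b, HasFDerivAt g (ω x) x) :
    AnalyticAt ℂ g b := by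
  obtain ⟨p, r₀, hp₀⟩ := hω
  obtain ⟨ε, hε, hball⟩ := EMetric.mem_nhds_iff.1 hg
  set r := min r₀ ε
  have hp : HasFPowerSeriesOnBall ω p b r := hp₀.mono (lt_min hp₀.r_pos hε) (min_le_left _ _)
  let q : FormalMultilinearSeries ℂ E F := fun n ↦ ((max n 1 : ℕ) : ℂ)⁻¹ • p.unshift (g b) n
  have hq : r ≤ q.radius := by
    refine hp.r_le.trans ?_
    rw [← p.radius_unshift (g b)]
    refine FormalMultilinearSeries.radius_le_of_le fun n ↦ ?_
    have hn : (1 : ℝ) ≤ (max n 1 : ℕ) := by exact_mod_cast le_max_right n 1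
    rw [norm_smul, norm_inv, Complex.norm_natCast]
    exact mul_le_of_le_one_left (norm_nonneg _) (inv_le_one_of_one_le₀ hn)
  refine ⟨q, r, hq, hp.r_pos, fun {y} hy ↦ ?_⟩
  have hline (t : ℝ) (ht : t ∈ Icc (0 : ℝ) 1) : (t : ℂ) • y ∈ eball (0 : E) r := by
    rw [mem_eball_zero_iff] at hy ⊢
    refine lt_of_le_of_lt ?_ hy
    rw [enorm_le_iff_norm_le, norm_smul, Complex.norm_real, Real.norm_of_nonneg ht.1]
    exact mul_le_of_le_one_left (norm_nonneg _) ht.2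
  have hline' (t : ℝ) (ht : t ∈ Icc (0 : ℝ) 1) : b + (t : ℂ) • y ∈ eball b r := by
    simpa [edist_eq_enorm_sub] using hline t ht
  have hderiv (t : ℝ) (ht : t ∈ uIcc (0 : ℝ) 1) :
      HasDerivAt (fun s : ℝ ↦ g (b + (s : ℂ) • y)) (ω (b + (t : ℂ) • y) y) t := by
    rw [uIcc_of_le zero_le_one] at ht
    have hgt : HasFDerivAt g (ω (b + (t : ℂ) • y)) (b + (t : ℂ) • y) :=
      hball (eball_subset_eball (min_le_right _ _) (hline' t ht))
    have hlin : HasDerivAt (fun s : ℝ ↦ b + (s : ℂ) • y) y t := by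
      simpa using ((Complex.ofRealCLM.hasDerivAt (x := t)).smul_const y).const_add b
    exact (hgt.restrictScalars ℝ).comp_hasDerivAt t hlin
  have hcont : ContinuousOn (fun t : ℝ ↦ ω (b + (t : ℂ) • y) y) (uIcc 0 1) := by
    rw [uIcc_of_le zero_le_one]
    refine ContinuousOn.clm_apply (hp.continuousOn.comp (by fun_prop) hline') continuousOn_const
  have hint : HasSum (fun n ↦ ∫ t in (0 : ℝ)..1, (t : ℂ) ^ n • p n (fun _ ↦ y) y)
      (∫ t in (0 : ℝ)..1, ω (b + (t : ℂ) • y) y) := by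
    refine intervalIntegral.hasSum_integral_of_dominated_convergence
      (fun n _ ↦ ‖p n fun _ ↦ y‖ * ‖y‖) (fun n ↦ ?_) (fun n ↦ .of_forall fun t ht ↦ ?_)
      (.of_forall fun t _ ↦ ?_) intervalIntegrable_const (.of_forall fun t ht ↦ ?_)
    · exact (by fun_prop : Continuous fun t : ℝ ↦ (t : ℂ) ^ n • p n (fun _ ↦ y) y
        ).aestronglyMeasurable
    · rw [uIoc_of_le zero_le_one] at ht
      rw [norm_smul, norm_pow, Complex.norm_real, Real.norm_of_nonneg ht.1.le]
      exact (mul_le_of_le_one_left (norm_nonneg _) (pow_le_one₀ ht.1.le ht.2)).trans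
        ((p n fun _ ↦ y).le_opNorm y)
    · exact (p.summable_norm_apply (eball_subset_eball hp.r_le hy)).mul_right _
    · rw [uIoc_of_le zero_le_one] at ht
      have h := (hp.hasSum (hline t (Ioc_subset_Icc_self ht))).mapL
        (ContinuousLinearMap.apply ℂ F y)
      simp_rw [(p _).map_smul_univ (fun _ ↦ (t : ℂ)) (fun _ ↦ y)] at h
      simpa using h
  rw [intervalIntegral.integral_eq_sub_of_hasDerivAt hderiv hcont.intervalIntegrable] at hint
  rw [← hasSum_nat_add_iff' 1]
  convert! hint using 1
  · ext n
    rw [intervalIntegral.integral_smul_const]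
    have hpow : ∫ t in (0 : ℝ)..1, (t : ℂ) ^ n = ((n + 1 : ℕ) : ℂ)⁻¹ := by
      simp_rw [← Complex.ofReal_pow]
      rw [intervalIntegral.integral_ofReal, integral_pow]
      simp
    rw [hpow]
    simp [q, FormalMultilinearSeries.unshift, Fin.init_def]
  · simp [q, FormalMultilinearSeries.unshift]

/-- **Poincaré lemma** for holomorphic 1-forms on a star-shaped open set. -/
theorem StarConvex.exists_analyticOnNhd_hasFDerivAt {E F : Type*} [NormedAddCommGroup E]
    [NormedSpace ℂ E] [NormedAddCommGroup F] [NormedSpace ℂ F] [CompleteSpace F] {U : Set E} {a : E}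
    (hstar : StarConvex ℝ a U) (hopen : IsOpen U) {ω : E → E →L[ℂ] F}
    (hω : AnalyticOnNhd ℂ ω U)
    (hsymm : ∀ x ∈ U, ∀ u v, fderiv ℂ ω x u v = fderiv ℂ ω x v u) :
    ∃ g : E → F, AnalyticOnNhd ℂ g U ∧ ∀ x ∈ U, HasFDerivAt g (ω x) x := by
  have hderiv : ∀ b ∈ U, HasFDerivAt (curveIntegral ω <| .segment a ·) (ω b) b := by
    intro b hb
    have hcompact : IsCompact (segment ℝ a b) := by
      rw [segment_eq_image_lineMap]
      exact isCompact_Icc.image AffineMap.lineMap_continuous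
    obtain ⟨δ, hδ, hsub⟩ := hcompact.exists_thickening_subset_open hopen (hstar.segment_subset hb)
    have hmem := self_subset_thickening hδ (segment ℝ a b)
    have h := ((convex_segment (𝕜 := ℝ) a b).thickening δ
      ).hasFDerivWithinAt_curveIntegral_segment_of_hasFDerivWithinAt_symmetric
      (ω := ω) (dω := fun x ↦ (fderiv ℂ ω x).restrictScalars ℝ)
      (fun x hx ↦ ((hω x (hsub hx)).differentiableAt.hasFDerivAt.restrictScalars ℝ).hasFDerivWithinAt)
      (fun x hx u _ v _ ↦ hsymm x (hsub hx) u v)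
      (hmem (left_mem_segment ℝ a b)) (hmem (right_mem_segment ℝ a b))
    exact h.hasFDerivAt (isOpen_thickening.mem_nhds (hmem (right_mem_segment ℝ a b)))
  refine ⟨_, fun b hb ↦ (hω b hb).of_eventually_hasFDerivAt ?_, hderiv⟩
  filter_upwards [hopen.mem_nhds hb] with x hx using hderiv x hx

/-- The determinant, as a continuous multilinear map of the rows. -/
noncomputable def continuousDet (ι : Type*) [Fintype ι] [DecidableEq ι] :
    ContinuousMultilinearMap ℂ (fun _ : ι ↦ ι → ℂ) ℂ where
  toMultilinearMap := Matrix.detRowAlternating.toMultilinearMap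
  cont := (continuous_id.matrix_det : Continuous fun M : Matrix ι ι ℂ ↦ M.det)

theorem continuousDet_apply {ι : Type*} [Fintype ι] [DecidableEq ι] (w : ι → ι → ℂ) :
    continuousDet ι w = Matrix.detRowAlternating w :=
  rfl

section ContractedVolumeForm

variable {ι : Type*} [Fintype ι] [DecidableEq ι]

/-- The volume form contracted with the vector fields `Y i`, `i ≠ l`: the 1-form
`v ↦ det (…, Y i x, …, v, …)`, with `v` in position `l`. -/
noncomputable def contractedVolumeForm (Y : ι → (ι → ℂ) → ι → ℂ) (l : ι) (x : ι → ℂ) :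
    (ι → ℂ) →L[ℂ] ℂ :=
  (continuousDet ι).toContinuousLinearMap (fun i ↦ Y i x) l

theorem contractedVolumeForm_apply (Y : ι → (ι → ℂ) → ι → ℂ) (l : ι) (x v : ι → ℂ) :
    contractedVolumeForm Y l x v = Matrix.detRowAlternating (update (fun i ↦ Y i x) l v) :=
  rfl

theorem analyticAt_update_apply {Y : ι → (ι → ℂ) → ι → ℂ} {x : ι → ℂ}
    (hY : ∀ i, AnalyticAt ℂ (Y i) x) (l : ι) (v : ι → ℂ) :
    AnalyticAt ℂ (fun x ↦ update (fun i ↦ Y i x) l v) x := by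
  refine AnalyticAt.pi fun i ↦ ?_
  by_cases h : i = l
  · subst h
    simpa using analyticAt_const
  · simpa [h] using hY i

theorem analyticAt_contractedVolumeForm {Y : ι → (ι → ℂ) → ι → ℂ} {x : ι → ℂ}
    (hY : ∀ i, AnalyticAt ℂ (Y i) x) (l : ι) :
    AnalyticAt ℂ (contractedVolumeForm Y l) x := by
  have hsum : contractedVolumeForm Y l = fun x ↦ ∑ k : ι,
      ContinuousLinearMap.smulRightL ℂ (ι → ℂ) ℂ (ContinuousLinearMap.proj k)
        (continuousDet ι (update (fun i ↦ Y i x) l (Pi.single k 1))) := by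
    ext x v
    have hsingle (k : ι) : (fun j ↦ if k = j then 1 else 0) = (Pi.single k 1 : ι → ℂ) := by
      ext j
      simp [Pi.single_apply, eq_comm]
    rw [← ContinuousLinearMap.coe_coe, LinearMap.pi_apply_eq_sum_univ]
    simp [contractedVolumeForm_apply, continuousDet_apply, hsingle]
  rw [hsum]
  refine Finset.analyticAt_fun_sum _ fun k _ ↦ ?_
  exact (ContinuousLinearMap.analyticAt _ _).comp
    ((continuousDet ι).analyticAt.comp (analyticAt_update_apply hY l _))

theorem fderiv_contractedVolumeForm_apply {Y : ι → (ι → ℂ) → ι → ℂ} {x : ι → ℂ} (l : ι)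
    (hY : ∀ i, AnalyticAt ℂ (Y i) x) (u v : ι → ℂ) :
    fderiv ℂ (contractedVolumeForm Y l) x u v = ∑ i ∈ Finset.univ.erase l,
      Matrix.detRowAlternating (update (update (fun i ↦ Y i x) l v) i (fderiv ℂ (Y i) x u)) := by
  have hdiff : DifferentiableAt ℂ (contractedVolumeForm Y l) x :=
    (analyticAt_contractedVolumeForm hY l).differentiableAt
  have hupd : HasFDerivAt (fun x ↦ update (fun i ↦ Y i x) l v)
      (ContinuousLinearMap.pi (update (fun i ↦ fderiv ℂ (Y i) x) l 0)) x := by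
    refine hasFDerivAt_pi.2 fun i ↦ ?_
    by_cases h : i = l
    · subst h
      simpa using hasFDerivAt_const (𝕜 := ℂ) v x
    · simpa [h] using (hY i).differentiableAt.hasFDerivAt
  have h := (((continuousDet ι).hasFDerivAt _).comp x hupd).unique
    (hdiff.hasFDerivAt.clm_apply (hasFDerivAt_const v x))
  have hu : ∑ i, Matrix.detRowAlternating (update (update (fun i ↦ Y i x) l v) i
      (update (fun i ↦ fderiv ℂ (Y i) x) l 0 i u)) =
        fderiv ℂ (contractedVolumeForm Y l) x u v := by
    simpa [continuousDet_apply] using DFunLike.congr_fun h u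
  rw [← hu, ← Finset.add_sum_erase _ _ (Finset.mem_univ l), update_self,
    zero_apply, AlternatingMap.map_update_zero, zero_add]
  refine Finset.sum_congr rfl fun i hi ↦ ?_
  rw [update_of_ne (Finset.ne_of_mem_erase hi)]

/-- The volume form contracted with commuting divergence-free vector fields is closed. -/
theorem fderiv_contractedVolumeForm_symm {Y : ι → (ι → ℂ) → ι → ℂ} {x : ι → ℂ} (l : ι)
    (hY : ∀ i, AnalyticAt ℂ (Y i) x)
    (hcomm : ∀ i j, fderiv ℂ (Y j) x (Y i x) = fderiv ℂ (Y i) x (Y j x))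
    (htr : ∀ i, LinearMap.trace ℂ (ι → ℂ) (fderiv ℂ (Y i) x : (ι → ℂ) →ₗ[ℂ] (ι → ℂ)) = 0)
    (u v : ι → ℂ) :
    fderiv ℂ (contractedVolumeForm Y l) x u v = fderiv ℂ (contractedVolumeForm Y l) x v u := by
  rw [fderiv_contractedVolumeForm_apply l hY, fderiv_contractedVolumeForm_apply l hY]
  exact sum_det_update_symm l (fun i ↦ Y i x) (fun i ↦ (fderiv ℂ (Y i) x : (ι → ℂ) →ₗ[ℂ] (ι → ℂ)))
    hcomm htr u v

end ContractedVolumeForm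

/-- **Exactness of the contracted volume form** (step 1 of Zung's isochore
theorem). If `X₁, …, X_{n-1}` are pairwise commuting isochore holomorphic
vector fields on a star-shaped open neighborhood `U` of `0 ∈ ℂⁿ`, then the
holomorphic 1-form `α = i_{X₁} ⋯ i_{X_{n-1}} Ω`, given by
`α(x)(v) = det(X₁(x), …, X_{n-1}(x), v)`, is exact: `α = dg` for a
holomorphic function `g`, which in particular is a common first integral of
the `X_i`. -/
theorem contracted_volume_form_exact
    (n : ℕ) (hn : 1 ≤ n)
    (U : Set (Fin n → ℂ)) (hUopen : IsOpen U) (h0U : (0 : Fin n → ℂ) ∈ U)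
    (hUstar : StarConvex ℝ (0 : Fin n → ℂ) U)
    (X : Fin (n - 1) → (Fin n → ℂ) → (Fin n → ℂ))
    (hXan : ∀ i, AnalyticOnNhd ℂ (X i) U)
    (hcomm : ∀ i j, ∀ x ∈ U, VectorField.lieBracket ℂ (X i) (X j) x = 0)
    (hiso : ∀ i, ∀ x ∈ U,
      LinearMap.trace ℂ (Fin n → ℂ)
        (fderiv ℂ (X i) x : (Fin n → ℂ) →ₗ[ℂ] (Fin n → ℂ)) = 0) :
    ∃ g : (Fin n → ℂ) → ℂ,
      AnalyticOnNhd ℂ g U ∧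
      (∀ x ∈ U, ∀ v : Fin n → ℂ,
        fderiv ℂ g x v =
          (Matrix.of fun i j : Fin n =>
            if h : (j : ℕ) < n - 1 then X ⟨j, h⟩ x i else v i).det) ∧
      ∀ x ∈ U, ∀ i, fderiv ℂ g x (X i x) = 0 := by
  let l : Fin n := ⟨n - 1, by omega⟩
  let Y : Fin n → (Fin n → ℂ) → (Fin n → ℂ) := fun j x ↦
    if h : (j : ℕ) < n - 1 then X ⟨j, h⟩ x else 0
  have hYlt (j : Fin n) (h : (j : ℕ) < n - 1) : Y j = X ⟨j, h⟩ := by ext; simp [Y, h]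
  have hYge (j : Fin n) (h : ¬ (j : ℕ) < n - 1) : Y j = fun _ ↦ 0 := by ext; simp [Y, h]
  have hYan (j : Fin n) : AnalyticOnNhd ℂ (Y j) U := by
    by_cases h : (j : ℕ) < n - 1
    · exact hYlt j h ▸ hXan _
    · exact hYge j h ▸ analyticOnNhd_const
  have hYcomm (x) (hx : x ∈ U) (i j : Fin n) :
      fderiv ℂ (Y j) x (Y i x) = fderiv ℂ (Y i) x (Y j x) := by
    by_cases hi : (i : ℕ) < n - 1
    · by_cases hj : (j : ℕ) < n - 1
      · rw [hYlt i hi, hYlt j hj]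
        exact sub_eq_zero.1 (hcomm ⟨i, hi⟩ ⟨j, hj⟩ x hx)
      · simp [hYge j hj]
    · simp [hYge i hi]
  have hYtr (x) (hx : x ∈ U) (i : Fin n) : LinearMap.trace ℂ (Fin n → ℂ)
      (fderiv ℂ (Y i) x : (Fin n → ℂ) →ₗ[ℂ] (Fin n → ℂ)) = 0 := by
    by_cases hi : (i : ℕ) < n - 1
    · rw [hYlt i hi]
      exact hiso _ x hx
    · simp [hYge i hi]
  have hmatrix (x v : Fin n → ℂ) : contractedVolumeForm Y l x v =
      (Matrix.of fun i j : Fin n => if h : (j : ℕ) < n - 1 then X ⟨j, h⟩ x i else v i).det := by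
    rw [contractedVolumeForm_apply, ← Matrix.det_transpose]
    change Matrix.det _ = Matrix.det _
    congr 1
    ext j i
    by_cases h : (j : ℕ) < n - 1
    · have hjl : j ≠ l := fun e ↦ by simp [e, l] at h
      simp [hjl, Y, h]
    · obtain rfl : j = l := Fin.ext (by simp only [l]; omega)
      simp [l]
  obtain ⟨g, hgan, hg⟩ := hUstar.exists_analyticOnNhd_hasFDerivAt hUopen
    (fun x hx ↦ analyticAt_contractedVolumeForm (fun i ↦ hYan i x hx) l)
    fun x hx u v ↦ fderiv_contractedVolumeForm_symm l (fun i ↦ hYan i x hx) (hYcomm x hx)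
      (hYtr x hx) u v
  have hdet (x) (hx : x ∈ U) (v) := (DFunLike.congr_fun (hg x hx).fderiv v).trans (hmatrix x v)
  refine ⟨g, hgan, hdet, fun x hx i ↦ ?_⟩
  rw [hdet x hx]
  refine Matrix.det_zero_of_column_eq (i := ⟨i, by omega⟩) (j := l) ?_ fun k ↦ ?_
  · simpa [l, Fin.ext_iff] using i.2.ne
  · simp [l]
end
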